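/- Let (R, m, k) be a Cohen–Macaulay commutative Noetherian local ring of dimension d with minimal multiplicity, i.e., there exists an R-regular sequence x₁, …, x_d ∈ m with m² = (x₁, …, x_d)m. Let f₁, …, f_c ∈ m be an R-regular sequence and set S = R/(f₁, …, f_c). Let M be a finitely generated S-module and set i₀ = dim(S) − depth_S(M). (1) If i₀ ≤ 1 and Ext_S^i(M, M) = 0 for some d+c+1 consecutive values of i with all these values ≥ i₀ + 2, then either pd_S M < ∞ or M has finite injective dimension over S. (2) If Ext_S^i(M, M) = 0 for all i₀ + 2 ≤ i ≤ i₀ + (d+c) + 2 and Ext_S^j(M, S) = 0 for all 1 ≤ j ≤ 2i₀ + (d+c) + 2, then M is a free S-module. -/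

import Mathlib

open CategoryTheory IsLocalRing

section Prelim

variable (R : Type) [CommRing R]

/-- `Tor_i^R(M, N) = 0`. -/
noncomputable def TorVanish (M N : Type) [AddCommGroup M] [Module R M]
    [AddCommGroup N] [Module R N] (i : ℕ) : Prop :=
  Subsingleton (((Tor (ModuleCat R) i).obj (ModuleCat.of R M)).obj (ModuleCat.of R N))

/-- `Ext_R^i(M, N) = 0`. -/
noncomputable def ExtVanish (M N : Type) [AddCommGroup M] [Module R M]
    [AddCommGroup N] [Module R N] (i : ℕ) : Prop :=
  Subsingleton (((Ext R (ModuleCat R) i).obj (Opposite.op (ModuleCat.of R M))).obj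
    (ModuleCat.of R N))

/-- `pd_R M < n`, expressed by the standard characterization
`Ext_R^i(M, -) = 0` for all `i ≥ n`. -/
def ProjDimLT (M : Type) [AddCommGroup M] [Module R M] (n : ℕ) : Prop :=
  ∀ (N : ModuleCat R) (i : ℕ), n ≤ i → ExtVanish R M N i

/-- `pd_R M < ∞`. -/
def ProjDimFinite (M : Type) [AddCommGroup M] [Module R M] : Prop :=
  ∃ n, ProjDimLT R M n

/-- `id_R M < n`, expressed by the standard characterization
`Ext_R^i(-, M) = 0` for all `i ≥ n`. -/
def InjDimLT (M : Type) [AddCommGroup M] [Module R M] (n : ℕ) : Prop :=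
  ∀ (N : ModuleCat R) (i : ℕ), n ≤ i → ExtVanish R N M i

/-- `id_R M < ∞`. -/
def InjDimFinite (M : Type) [AddCommGroup M] [Module R M] : Prop :=
  ∃ n, InjDimLT R M n

/-- `M` is a Tor-rigid `R`-module. -/
def TorRigid (M : Type) [AddCommGroup M] [Module R M] : Prop :=
  ∀ (N : ModuleCat R), Module.Finite R N → ∀ n : ℕ, 1 ≤ n → TorVanish R M N n →
    ∀ i : ℕ, n ≤ i → TorVanish R M N i

variable [IsLocalRing R]

/-- The depth of `M`: the supremum of lengths of `M`-regular sequences contained in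
the maximal ideal. -/
noncomputable def depth (M : Type) [AddCommGroup M] [Module R M] : ℕ∞ :=
  sSup {n : ℕ∞ | ∃ rs : List R, (∀ x ∈ rs, x ∈ maximalIdeal R) ∧
    RingTheory.Sequence.IsRegular M rs ∧ (rs.length : ℕ∞) = n}

/-- The dimension of a module, i.e. the Krull dimension of `R ⧸ ann M`. -/
noncomputable def moduleDim (M : Type) [AddCommGroup M] [Module R M] : WithBot ℕ∞ :=
  ringKrullDim (R ⧸ Module.annihilator R M)

/-- `M` is an Ulrich `R`-module of dimension `s` : `M` is nonzero, Cohen–Macaulay of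
dimension `s`, and there is an `M`-regular sequence `x₁, …, x_s` in the maximal ideal
with `mM = (x₁, …, x_s)M`. -/
def IsUlrich (M : Type) [AddCommGroup M] [Module R M] (s : ℕ) : Prop :=
  Nontrivial M ∧ moduleDim R M = (s : ℕ∞) ∧ depth R M = (s : ℕ∞) ∧
  ∃ rs : List R, rs.length = s ∧ (∀ x ∈ rs, x ∈ maximalIdeal R) ∧
    RingTheory.Sequence.IsRegular M rs ∧
    (maximalIdeal R) • (⊤ : Submodule R M) = (Ideal.ofList rs) • ⊤

/-- `R` is a regular local ring: the maximal ideal is generated by `dim R` elements. -/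
def IsRegularLocal : Prop :=
  ∃ s : Finset R, Ideal.span (s : Set R) = maximalIdeal R ∧
    (s.card : WithBot ℕ∞) = ringKrullDim R

/-- `R` (of dimension `d`) has minimal multiplicity: there is an `R`-regular sequence
`x₁, …, x_d` in the maximal ideal `m` with `m² = (x₁, …, x_d)m`. -/
def HasMinimalMultiplicity (d : ℕ) : Prop :=
  ∃ rs : List R, rs.length = d ∧ (∀ x ∈ rs, x ∈ maximalIdeal R) ∧
    RingTheory.Sequence.IsWeaklyRegular R rs ∧
    maximalIdeal R ^ 2 = Ideal.ofList rs * maximalIdeal R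

/-- The `n`-th Betti number of `M` over the local ring `R`, i.e. the dimension over the
residue field `k = R ⧸ m` of `Tor_n^R(M, k)` (which is an `m`-torsion module, so we take
the dimension of its reduction mod `m`). -/
noncomputable def betti (M : Type) [AddCommGroup M] [Module R M] (n : ℕ) : ℕ :=
  Module.finrank (R ⧸ maximalIdeal R)
    ((((Tor (ModuleCat R) n).obj (ModuleCat.of R M)).obj
        (ModuleCat.of R (R ⧸ maximalIdeal R))) ⧸
      (maximalIdeal R • (⊤ : Submodule R
        (((Tor (ModuleCat R) n).obj (ModuleCat.of R M)).obj
          (ModuleCat.of R (R ⧸ maximalIdeal R))))))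

end Prelim

/-!
Let `L` be a high syzygy of `M` over `R`. By depth counting the sequence `xs` with `m ^ 2 = xs m`
is regular on `L`, and `m` kills `L ⧸ xs L`, so `L ⧸ xs L` is a sum of copies of `k`. Vanishing of
enough consecutive `Ext_R(M, Y) ≅ Ext_R(L, Y)` therefore gives the vanishing of `Ext_R(k, Y)`,
unless `L = 0`. For `Y = M` this means that `M` has finite injective dimension over `R`; if moreover
`Ext_R(k, R)` vanishes in high degrees, then so does `Ext_R(k, L)`, hence `Ext_R(k, k)`, and `L` is
free.

Finite projective or injective dimension passes from `R` to `S = R ⧸ (fs)` one element at a time.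
In the change of rings sequence for `B = A ⧸ (f)`, vanishing of `Ext_A` in high degrees makes
Eisenbud's operator `Ext_B^n → Ext_B^{n + 2}` bijective. It is multiplication by a class in
`Ext_B^2(M, M)`, which is nilpotent because some `Ext_B^{2j}(M, M)` vanishes, so `Ext_B` vanishes in
high degrees too.
-/

open Abelian RingTheory.Sequence
open scoped Pointwise

universe u

/-! ### Vanishing of Ext along short exact sequences -/

/-- `ExtIsZero R M N n` says that the group `Ext_R^n(M, N)` of Yoneda extension classes is zero.
In positive degrees this is `ExtVanish`, see `extVanish_iff`; the Yoneda groups carry the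
composition products used in the descent along a regular element. -/
def ExtIsZero (R : Type u) [CommRing R] (M N : Type u) [AddCommGroup M] [Module R M]
    [AddCommGroup N] [Module R N] (n : ℕ) : Prop :=
  Subsingleton (Ext (ModuleCat.of R M) (ModuleCat.of R N) n)

/-- A short exact sequence `0 → A → B → C → 0` of modules, given by its two linear maps. -/
structure IsShortExact {R : Type u} [CommRing R] {A B C : Type u} [AddCommGroup A] [Module R A]
    [AddCommGroup B] [Module R B] [AddCommGroup C] [Module R C]
    (f : A →ₗ[R] B) (g : B →ₗ[R] C) : Prop where
  injective : Function.Injective f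
  exact : Function.Exact f g
  surjective : Function.Surjective g

section Ext

variable {R : Type u} [CommRing R] {A B C X : Type u} [AddCommGroup A] [Module R A]
  [AddCommGroup B] [Module R B] [AddCommGroup C] [Module R C] [AddCommGroup X] [Module R X]
  {n : ℕ}

lemma extIsZero_iff : ExtIsZero R A B n ↔
    ∀ e : Ext (ModuleCat.of R A) (ModuleCat.of R B) n, e = 0 :=
  ⟨fun h e => @Subsingleton.elim _ h e 0, fun h => ⟨fun a b => (h a).trans (h b).symm⟩⟩

lemma ExtIsZero.eq_zero (h : ExtIsZero R A B n)
    (e : Ext (ModuleCat.of R A) (ModuleCat.of R B) n) : e = 0 :=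
  extIsZero_iff.1 h e

lemma extIsZero_succ_of_projective [Module.Projective R A] (n : ℕ) : ExtIsZero R A X (n + 1) :=
  have : Projective (ModuleCat.of R A) := (IsProjective.iff_projective A).1 inferInstance
  Ext.subsingleton_of_projective _ _ n

lemma extIsZero_succ_of_injective [Module.Injective R A] (n : ℕ) : ExtIsZero R X A (n + 1) :=
  have : Injective (ModuleCat.of R A) := Module.injective_object_of_injective_module R A
  Ext.subsingleton_of_injective _ _ n

lemma extIsZero_zero_iff : ExtIsZero R A X 0 ↔ ∀ φ : A →ₗ[R] X, φ = 0 := by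
  unfold ExtIsZero
  rw [(Ext.addEquiv₀.trans ModuleCat.homAddEquiv).toEquiv.subsingleton_congr]
  exact ⟨fun h φ => Subsingleton.elim φ 0, fun h => ⟨fun φ ψ => (h φ).trans (h ψ).symm⟩⟩

lemma ExtIsZero.of_retract_left (i : A →ₗ[R] B) (p : B →ₗ[R] A) (hpi : p ∘ₗ i = LinearMap.id)
    (hB : ExtIsZero R B X n) : ExtIsZero R A X n := by
  refine extIsZero_iff.2 fun e => ?_
  have hid : ModuleCat.ofHom i ≫ ModuleCat.ofHom p = 𝟙 _ := by
    rw [← ModuleCat.ofHom_comp, hpi, ModuleCat.ofHom_id]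
  rw [← Ext.mk₀_id_comp e, ← hid, ← Ext.mk₀_comp_mk₀_assoc, hB.eq_zero (Ext.comp _ e _),
    Ext.comp_zero]

lemma ExtIsZero.of_retract_right (i : A →ₗ[R] B) (p : B →ₗ[R] A) (hpi : p ∘ₗ i = LinearMap.id)
    (hB : ExtIsZero R X B n) : ExtIsZero R X A n := by
  refine extIsZero_iff.2 fun e => ?_
  have hid : ModuleCat.ofHom i ≫ ModuleCat.ofHom p = 𝟙 _ := by
    rw [← ModuleCat.ofHom_comp, hpi, ModuleCat.ofHom_id]
  rw [← Ext.comp_mk₀_id e, ← hid, ← Ext.mk₀_comp_mk₀, ← Ext.comp_assoc_of_third_deg_zero,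
    hB.eq_zero (e.comp _ _), Ext.zero_comp]

lemma extIsZero_congr_left (i : A ≃ₗ[R] B) : ExtIsZero R A X n ↔ ExtIsZero R B X n :=
  ⟨.of_retract_left i.symm.toLinearMap i.toLinearMap (by ext; simp),
   .of_retract_left i.toLinearMap i.symm.toLinearMap (by ext; simp)⟩

lemma extIsZero_congr_right (i : A ≃ₗ[R] B) : ExtIsZero R X A n ↔ ExtIsZero R X B n :=
  ⟨.of_retract_right i.symm.toLinearMap i.toLinearMap (by ext; simp),
   .of_retract_right i.toLinearMap i.symm.toLinearMap (by ext; simp)⟩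

lemma extIsZero_of_subsingleton_left [Subsingleton A] (n : ℕ) : ExtIsZero R A X n := by
  have : Limits.IsZero (ModuleCat.of R A) := ModuleCat.isZero_of_iff_subsingleton.2 ‹_›
  refine extIsZero_iff.2 fun e => ?_
  rw [← Ext.mk₀_id_comp e, this.eq_of_src (𝟙 _) 0, Ext.mk₀_zero, Ext.zero_comp]

lemma extIsZero_of_subsingleton_right [Subsingleton A] (n : ℕ) : ExtIsZero R X A n := by
  have : Limits.IsZero (ModuleCat.of R A) := ModuleCat.isZero_of_iff_subsingleton.2 ‹_›
  refine extIsZero_iff.2 fun e => ?_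
  rw [← Ext.comp_mk₀_id e, this.eq_of_src (𝟙 _) 0, Ext.mk₀_zero, Ext.comp_zero]

namespace IsShortExact

variable {f : A →ₗ[R] B} {g : B →ₗ[R] C} (h : IsShortExact f g)
include h

lemma shortExact :
    (ModuleCat.shortComplexOfCompEqZero f g h.exact.linearMap_comp_eq_zero).ShortExact :=
  ModuleCat.shortComplex_shortExact _ h.exact h.injective h.surjective

lemma covariant₂ (hA : ExtIsZero R X A n) (hC : ExtIsZero R X C n) : ExtIsZero R X B n := by
  refine extIsZero_iff.2 fun e => ?_
  obtain ⟨y, rfl⟩ := Ext.covariant_sequence_exact₂ _ h.shortExact e (hC.eq_zero _)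
  rw [hA.eq_zero y, Ext.zero_comp]

lemma covariant₁ (hB : ExtIsZero R X B (n + 1)) (hC : ExtIsZero R X C n) :
    ExtIsZero R X A (n + 1) := by
  refine extIsZero_iff.2 fun e => ?_
  obtain ⟨y, rfl⟩ := Ext.covariant_sequence_exact₁ _ h.shortExact e (hB.eq_zero _) rfl
  rw [hC.eq_zero y, Ext.zero_comp]

lemma covariant₃ (hB : ExtIsZero R X B n) (hA : ExtIsZero R X A (n + 1)) :
    ExtIsZero R X C n := by
  refine extIsZero_iff.2 fun e => ?_
  obtain ⟨y, rfl⟩ := Ext.covariant_sequence_exact₃ _ h.shortExact e rfl (hA.eq_zero _)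
  rw [hB.eq_zero y, Ext.zero_comp]

lemma contravariant₂ (hA : ExtIsZero R A X n) (hC : ExtIsZero R C X n) : ExtIsZero R B X n := by
  refine extIsZero_iff.2 fun e => ?_
  obtain ⟨y, rfl⟩ := Ext.contravariant_sequence_exact₂ h.shortExact _ e (hA.eq_zero _)
  rw [hC.eq_zero y, Ext.comp_zero]

lemma contravariant₃ (hB : ExtIsZero R B X (n + 1)) (hA : ExtIsZero R A X n) :
    ExtIsZero R C X (n + 1) := by
  refine extIsZero_iff.2 fun e => ?_
  obtain ⟨y, rfl⟩ := Ext.contravariant_sequence_exact₃ h.shortExact _ e (hB.eq_zero _)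
    (add_comm 1 n)
  rw [hA.eq_zero y, Ext.comp_zero]

lemma contravariant₁ (hB : ExtIsZero R B X n) (hC : ExtIsZero R C X (n + 1)) :
    ExtIsZero R A X n := by
  refine extIsZero_iff.2 fun e => ?_
  obtain ⟨y, rfl⟩ := Ext.contravariant_sequence_exact₁ h.shortExact _ e (add_comm 1 n)
    (hC.eq_zero _)
  rw [hB.eq_zero y, Ext.comp_zero]

lemma dimension_shift_projective [Module.Projective R B] :
    ExtIsZero R C X (n + 2) ↔ ExtIsZero R A X (n + 1) :=
  ⟨h.contravariant₁ (extIsZero_succ_of_projective _),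
   h.contravariant₃ (extIsZero_succ_of_projective _)⟩

lemma dimension_shift_injective [Module.Injective R B] :
    ExtIsZero R X A (n + 2) ↔ ExtIsZero R X C (n + 1) :=
  ⟨h.covariant₃ (extIsZero_succ_of_injective _), h.covariant₁ (extIsZero_succ_of_injective _)⟩

lemma exists_extension (hC : ExtIsZero R C X 1) (φ : A →ₗ[R] X) :
    ∃ ψ : B →ₗ[R] X, ψ ∘ₗ f = φ := by
  obtain ⟨y, hy⟩ := Ext.contravariant_sequence_exact₁ h.shortExact _
    (Ext.mk₀ (ModuleCat.ofHom φ)) (add_comm 1 0) (hC.eq_zero _)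
  obtain ⟨ψ, rfl⟩ := Ext.addEquiv₀.symm.surjective y
  rw [Ext.addEquiv₀_symm_apply, Ext.mk₀_comp_mk₀] at hy
  exact ⟨ψ.hom, congrArg ModuleCat.Hom.hom (Ext.addEquiv₀.symm.injective hy)⟩

lemma extIsZero_one_iff_extension [Module.Projective R B] :
    ExtIsZero R C X 1 ↔ ∀ φ : A →ₗ[R] X, ∃ ψ : B →ₗ[R] X, ψ ∘ₗ f = φ := by
  refine ⟨h.exists_extension, fun hext => extIsZero_iff.2 fun e => ?_⟩
  obtain ⟨y, rfl⟩ := Ext.contravariant_sequence_exact₃ h.shortExact _ e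
    ((extIsZero_succ_of_projective 0).eq_zero _) (add_comm 1 0)
  obtain ⟨φ, rfl⟩ := Ext.addEquiv₀.symm.surjective y
  obtain ⟨ψ, hψ⟩ := hext φ.hom
  have hφ : φ = (ModuleCat.shortComplexOfCompEqZero f g h.exact.linearMap_comp_eq_zero).f ≫
      ModuleCat.ofHom ψ := ModuleCat.hom_ext hψ.symm
  rw [hφ, Ext.addEquiv₀_symm_apply, ← Ext.mk₀_comp_mk₀, ShortComplex.ShortExact.extClass_comp_assoc]

lemma exists_lift (hA : ExtIsZero R X A 1) (φ : X →ₗ[R] C) : ∃ ψ : X →ₗ[R] B, g ∘ₗ ψ = φ := by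
  obtain ⟨y, hy⟩ := Ext.covariant_sequence_exact₃ _ h.shortExact
    (Ext.mk₀ (ModuleCat.ofHom φ)) (zero_add 1) (hA.eq_zero _)
  obtain ⟨ψ, rfl⟩ := Ext.addEquiv₀.symm.surjective y
  rw [Ext.addEquiv₀_symm_apply, Ext.mk₀_comp_mk₀] at hy
  exact ⟨ψ.hom, congrArg ModuleCat.Hom.hom (Ext.addEquiv₀.symm.injective hy)⟩

lemma extIsZero_one_iff_lift [Module.Injective R B] :
    ExtIsZero R X A 1 ↔ ∀ φ : X →ₗ[R] C, ∃ ψ : X →ₗ[R] B, g ∘ₗ ψ = φ := by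
  refine ⟨h.exists_lift, fun hlift => extIsZero_iff.2 fun e => ?_⟩
  obtain ⟨y, rfl⟩ := Ext.covariant_sequence_exact₁ _ h.shortExact e
    ((extIsZero_succ_of_injective 0).eq_zero _) (zero_add 1)
  obtain ⟨φ, rfl⟩ := Ext.addEquiv₀.symm.surjective y
  obtain ⟨ψ, hψ⟩ := hlift φ.hom
  have hφ : φ = ModuleCat.ofHom ψ ≫
      (ModuleCat.shortComplexOfCompEqZero f g h.exact.linearMap_comp_eq_zero).g :=
    ModuleCat.hom_ext hψ.symm
  rw [hφ, Ext.addEquiv₀_symm_apply, ← Ext.mk₀_comp_mk₀, Ext.comp_assoc_of_second_deg_zero,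
    h.shortExact.comp_extClass, Ext.comp_zero]

end IsShortExact

end Ext

section Comparison

variable {R : Type} [CommRing R] {M N : Type} [AddCommGroup M] [Module R M]
  [AddCommGroup N] [Module R N] {n : ℕ}

-- Both sides say that every cocycle of degree `n` on a projective resolution is a coboundary.
lemma extVanish_iff (hn : 1 ≤ n) : ExtVanish R M N n ↔ ExtIsZero R M N n := by
  obtain ⟨p, rfl⟩ := Nat.exists_eq_add_of_le' hn
  let P := projectiveResolution (ModuleCat.of R M)
  have hcocycle : ExtVanish R M N (p + 1) ↔
      ∀ φ : P.complex.X (p + 1) ⟶ ModuleCat.of R N, P.complex.d (p + 2) (p + 1) ≫ φ = 0 →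
        ∃ ψ : P.complex.X p ⟶ ModuleCat.of R N, P.complex.d (p + 1) p ≫ ψ = φ := by
    unfold ExtVanish
    rw [← ModuleCat.isZero_iff_subsingleton,
      (P.isoExt (R := R) (p + 1) (ModuleCat.of R N)).isZero_iff,
      ← HomologicalComplex.exactAt_iff_isZero_homology,
      HomologicalComplex.exactAt_iff' _ p (p + 1) (p + 2) (by simp) (by simp),
      ShortComplex.moduleCat_exact_iff]
    rfl
  rw [hcocycle, extIsZero_iff]
  constructor
  · intro h e
    obtain ⟨φ, hφ, rfl⟩ := P.extMk_surjective e (p + 2) rfl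
    exact (P.extMk_eq_zero_iff _ _ _ _ p rfl).2 (h φ hφ)
  · intro h φ hφ
    exact (P.extMk_eq_zero_iff _ _ _ _ p rfl).1 (h (P.extMk φ (p + 2) rfl hφ))

end Comparison

/-! ### Ext and regular elements -/

section SMul

variable {R : Type u} [CommRing R] {A X Y : Type u} [AddCommGroup A] [Module R A]
  [AddCommGroup X] [Module R X] [AddCommGroup Y] [Module R Y] {x : R} {n : ℕ}

lemma isShortExact_lsmul_mkQ (hx : IsSMulRegular A x) :
    IsShortExact (LinearMap.lsmul R A x) (Submodule.mkQ (x • (⊤ : Submodule R A))) :=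
  ⟨hx, LinearMap.exact_lsmul_mkQ_smul_top A x, Submodule.mkQ_surjective _⟩

lemma ofHom_lsmul (x : R) :
    ModuleCat.ofHom (LinearMap.lsmul R A x) = x • 𝟙 (ModuleCat.of R A) :=
  rfl

lemma mk₀_lsmul_comp (x : R) (e : Ext (ModuleCat.of R A) (ModuleCat.of R Y) n) :
    (Ext.mk₀ (ModuleCat.ofHom (LinearMap.lsmul R A x))).comp e (zero_add n) = x • e := by
  rw [ofHom_lsmul, Ext.mk₀_smul, Ext.smul_comp, Ext.mk₀_id_comp]

lemma comp_mk₀_lsmul (x : R) (e : Ext (ModuleCat.of R A) (ModuleCat.of R Y) n) :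
    e.comp (Ext.mk₀ (ModuleCat.ofHom (LinearMap.lsmul R Y x))) (add_zero n) = x • e := by
  rw [ofHom_lsmul, Ext.mk₀_smul, Ext.comp_smul, Ext.comp_mk₀_id]

lemma ext_smul_eq_zero_of_mem_annihilator_left (hx : x ∈ Module.annihilator R A)
    (e : Ext (ModuleCat.of R A) (ModuleCat.of R Y) n) : x • e = 0 := by
  rw [← mk₀_lsmul_comp, Module.mem_annihilator_iff_lsmul_eq_zero.1 hx, ModuleCat.ofHom_zero,
    Ext.mk₀_zero, Ext.zero_comp]

lemma ext_smul_eq_zero_of_mem_annihilator_right (hx : x ∈ Module.annihilator R Y)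
    (e : Ext (ModuleCat.of R A) (ModuleCat.of R Y) n) : x • e = 0 := by
  rw [← comp_mk₀_lsmul, Module.mem_annihilator_iff_lsmul_eq_zero.1 hx, ModuleCat.ofHom_zero,
    Ext.mk₀_zero, Ext.comp_zero]

section FirstVariable

variable (hx : IsSMulRegular A x)
include hx

lemma ext_smul_surjective_of_extIsZero_quotSMulTop (h : ExtIsZero R (QuotSMulTop x A) Y (n + 1))
    (e : Ext (ModuleCat.of R A) (ModuleCat.of R Y) n) : ∃ e', x • e' = e := by
  obtain ⟨e', he'⟩ := Ext.contravariant_sequence_exact₁ (isShortExact_lsmul_mkQ hx).shortExact _ e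
    (add_comm 1 n) (h.eq_zero _)
  exact ⟨e', (mk₀_lsmul_comp x e').symm.trans he'⟩

lemma ExtIsZero.of_quotSMulTop_left_of_mem_annihilator (hY : x ∈ Module.annihilator R Y)
    (h : ExtIsZero R (QuotSMulTop x A) Y (n + 1)) : ExtIsZero R A Y n := by
  refine extIsZero_iff.2 fun e => ?_
  obtain ⟨e', rfl⟩ := ext_smul_surjective_of_extIsZero_quotSMulTop hx h e
  exact ext_smul_eq_zero_of_mem_annihilator_right hY e'

-- Multiplication by `x` is surjective on the finitely generated module `Ext_R^n(A, Y)`.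
lemma ExtIsZero.of_quotSMulTop_left [IsNoetherianRing R] [IsLocalRing R] [Module.Finite R A]
    [Module.Finite R Y] (hxm : x ∈ maximalIdeal R)
    (h : ExtIsZero R (QuotSMulTop x A) Y (n + 1)) : ExtIsZero R A Y n := by
  let E := Ext (ModuleCat.of R A) (ModuleCat.of R Y) n
  have : Module.Finite R (ModuleCat.of R A) := ‹Module.Finite R A›
  have : Module.Finite R (ModuleCat.of R Y) := ‹Module.Finite R Y›
  have hE : (⊤ : Submodule R E) = ⊥ := by
    refine Submodule.eq_bot_of_le_smul_of_le_jacobson_bot (maximalIdeal R) _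
      Module.Finite.fg_top (fun e _ => ?_) (IsLocalRing.maximalIdeal_le_jacobson _)
    obtain ⟨e', rfl⟩ := ext_smul_surjective_of_extIsZero_quotSMulTop hx h e
    exact Submodule.smul_mem_smul hxm Submodule.mem_top
  exact extIsZero_iff.2 fun e => (Submodule.mem_bot R).1 (hE ▸ Submodule.mem_top)

lemma ExtIsZero.quotSMulTop_left (h : ExtIsZero R A Y n) (h' : ExtIsZero R A Y (n + 1)) :
    ExtIsZero R (QuotSMulTop x A) Y (n + 1) :=
  (isShortExact_lsmul_mkQ hx).contravariant₃ h' h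

end FirstVariable

section SecondVariable

variable (hx : IsSMulRegular Y x)
include hx

lemma ExtIsZero.quotSMulTop_right (h : ExtIsZero R X Y n) (h' : ExtIsZero R X Y (n + 1)) :
    ExtIsZero R X (QuotSMulTop x Y) n :=
  (isShortExact_lsmul_mkQ hx).covariant₃ h h'

variable (hX : x ∈ Module.annihilator R X)
include hX

lemma extIsZero_zero_of_mem_annihilator : ExtIsZero R X Y 0 :=
  extIsZero_zero_iff.2 fun φ => LinearMap.ext fun y => hx <| by
    simp only [LinearMap.zero_apply, smul_zero, ← map_smul, Module.mem_annihilator.1 hX y, map_zero]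

lemma ExtIsZero.of_quotSMulTop_right (h : ExtIsZero R X (QuotSMulTop x Y) n) :
    ExtIsZero R X Y n := by
  refine extIsZero_iff.2 fun e => ?_
  obtain ⟨e', rfl⟩ := Ext.covariant_sequence_exact₂ _ (isShortExact_lsmul_mkQ hx).shortExact e
    (h.eq_zero _)
  exact (comp_mk₀_lsmul x e').trans (ext_smul_eq_zero_of_mem_annihilator_left hX e')

lemma ExtIsZero.succ_of_quotSMulTop_right (h : ExtIsZero R X (QuotSMulTop x Y) n) :
    ExtIsZero R X Y (n + 1) := by
  refine extIsZero_iff.2 fun e => ?_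
  obtain ⟨e', rfl⟩ := Ext.covariant_sequence_exact₁ _ (isShortExact_lsmul_mkQ hx).shortExact e
    ((comp_mk₀_lsmul x e).trans (ext_smul_eq_zero_of_mem_annihilator_left hX e)) rfl
  rw [h.eq_zero e', Ext.zero_comp]

end SecondVariable

end SMul

section ResidueField

variable {R : Type u} [CommRing R] {A X Y : Type u} [AddCommGroup A] [Module R A]
  [AddCommGroup X] [Module R X] [AddCommGroup Y] [Module R Y] {n : ℕ}

lemma ExtIsZero.pi_left (h : ExtIsZero R A Y n) (r : ℕ) : ExtIsZero R (Fin r → A) Y n := by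
  induction r with
  | zero => exact extIsZero_of_subsingleton_left n
  | succ r ih =>
    have hprod : IsShortExact (LinearMap.inl R A (Fin r → A)) (LinearMap.snd R A (Fin r → A)) :=
      ⟨LinearMap.inl_injective, .inl_snd, LinearMap.snd_surjective⟩
    exact (extIsZero_congr_left (Fin.consLinearEquiv R fun _ : Fin (r + 1) => A)).1
      (hprod.contravariant₂ h ih)

lemma ExtIsZero.pi_right (h : ExtIsZero R X A n) (r : ℕ) : ExtIsZero R X (Fin r → A) n := by
  induction r with
  | zero => exact extIsZero_of_subsingleton_right n
  | succ r ih =>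
    have hprod : IsShortExact (LinearMap.inl R A (Fin r → A)) (LinearMap.snd R A (Fin r → A)) :=
      ⟨LinearMap.inl_injective, .inl_snd, LinearMap.snd_surjective⟩
    exact (extIsZero_congr_right (Fin.consLinearEquiv R fun _ : Fin (r + 1) => A)).1
      (hprod.covariant₂ h ih)

lemma extIsZero_pi_left_iff {r : ℕ} [NeZero r] :
    ExtIsZero R (Fin r → A) Y n ↔ ExtIsZero R A Y n :=
  ⟨.of_retract_left (LinearMap.single R (fun _ : Fin r => A) 0) (LinearMap.proj 0)
    (by ext; simp), fun h => h.pi_left r⟩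

lemma extIsZero_pi_right_iff {r : ℕ} [NeZero r] :
    ExtIsZero R X (Fin r → A) n ↔ ExtIsZero R X A n :=
  ⟨.of_retract_right (LinearMap.single R (fun _ : Fin r => A) 0) (LinearMap.proj 0)
    (by ext; simp), fun h => h.pi_right r⟩

variable [IsLocalRing R] [Module.Finite R A] (hA : maximalIdeal R ≤ Module.annihilator R A)
include hA

lemma exists_linearEquiv_pi_residue :
    ∃ r, Nonempty (A ≃ₗ[R] (Fin r → R ⧸ maximalIdeal R)) := by
  let : Field (R ⧸ maximalIdeal R) := Ideal.Quotient.field _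
  have htors : Module.IsTorsionBySet R A (maximalIdeal R) := fun a x =>
    Module.mem_annihilator.1 (hA x.2) a
  let := htors.module
  have : IsScalarTower R (R ⧸ maximalIdeal R) A := htors.isScalarTower
  have : Module.Finite (R ⧸ maximalIdeal R) A := .of_restrictScalars_finite R _ _
  exact ⟨_, ⟨(Module.finBasis (R ⧸ maximalIdeal R) A).equivFun.restrictScalars R⟩⟩

lemma ExtIsZero.of_residue_left (h : ExtIsZero R (R ⧸ maximalIdeal R) Y n) :
    ExtIsZero R A Y n :=
  have ⟨r, ⟨i⟩⟩ := exists_linearEquiv_pi_residue hA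
  (extIsZero_congr_left i).2 (h.pi_left r)

lemma ExtIsZero.of_residue_right (h : ExtIsZero R X (R ⧸ maximalIdeal R) n) :
    ExtIsZero R X A n :=
  have ⟨r, ⟨i⟩⟩ := exists_linearEquiv_pi_residue hA
  (extIsZero_congr_right i).2 (h.pi_right r)

variable [Nontrivial A]

lemma exists_ne_zero_linearEquiv_pi_residue :
    ∃ r, NeZero r ∧ Nonempty (A ≃ₗ[R] (Fin r → R ⧸ maximalIdeal R)) := by
  obtain ⟨r, ⟨i⟩⟩ := exists_linearEquiv_pi_residue hA
  refine ⟨r, ⟨?_⟩, ⟨i⟩⟩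
  rintro rfl
  exact not_subsingleton A i.toEquiv.subsingleton

lemma extIsZero_iff_residue_left : ExtIsZero R A Y n ↔ ExtIsZero R (R ⧸ maximalIdeal R) Y n :=
  have ⟨_, _, ⟨i⟩⟩ := exists_ne_zero_linearEquiv_pi_residue hA
  (extIsZero_congr_left i).trans extIsZero_pi_left_iff

lemma extIsZero_iff_residue_right : ExtIsZero R X A n ↔ ExtIsZero R X (R ⧸ maximalIdeal R) n :=
  have ⟨_, _, ⟨i⟩⟩ := exists_ne_zero_linearEquiv_pi_residue hA
  (extIsZero_congr_right i).trans extIsZero_pi_right_iff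

end ResidueField

/-! ### Change of rings: reduction modulo a regular element -/

section QuotientByElement

variable {R : Type u} [CommRing R] {f : R} {A B C K M N : Type u}
  [AddCommGroup A] [Module R A] [AddCommGroup B] [Module R B] [AddCommGroup C] [Module R C]
  [AddCommGroup K] [Module R K]
  [AddCommGroup M] [Module R M] [Module (R ⧸ Ideal.span {f}) M]
  [IsScalarTower R (R ⧸ Ideal.span {f}) M]
  [AddCommGroup N] [Module R N] [Module (R ⧸ Ideal.span {f}) N]
  [IsScalarTower R (R ⧸ Ideal.span {f}) N]

lemma smul_eq_zero_of_quotient_span_singleton (m : M) : f • m = 0 := by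
  rw [← algebraMap_smul (R ⧸ Ideal.span {f}), Ideal.Quotient.algebraMap_eq,
    Ideal.Quotient.eq_zero_iff_mem.2 (Ideal.mem_span_singleton_self f), zero_smul]

lemma mk_quotSMulTop_eq_zero_iff {a : A} :
    (Submodule.Quotient.mk a : QuotSMulTop f A) = 0 ↔ ∃ a', f • a' = a := by
  simp only [Submodule.Quotient.mk_eq_zero, Submodule.mem_smul_pointwise_iff_exists,
    Submodule.mem_top, true_and]

lemma exists_quotSMulTop_lift (φ : A →ₗ[R] M) :
    ∃ ψ : QuotSMulTop f A →ₗ[R ⧸ Ideal.span {f}] M, ∀ a, ψ (Submodule.Quotient.mk a) = φ a := by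
  have hφ : f • (⊤ : Submodule R A) ≤ LinearMap.ker φ := by
    rintro _ ⟨a, -, rfl⟩
    exact (map_smul φ f a).trans (smul_eq_zero_of_quotient_span_singleton _)
  exact ⟨((f • ⊤ : Submodule R A).liftQ φ hφ).extendScalarsOfSurjective
    Ideal.Quotient.mk_surjective, fun _ => rfl⟩

/-- The `R ⧸ (f)`-linear map `A ⧸ fA → B ⧸ fB` induced by an `R`-linear map `A → B`. -/
def quotSMulTopMap (f : R) (g : A →ₗ[R] B) :
    QuotSMulTop f A →ₗ[R ⧸ Ideal.span {f}] QuotSMulTop f B :=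
  (QuotSMulTop.map f g).extendScalarsOfSurjective Ideal.Quotient.mk_surjective

lemma quotSMulTopMap_mk (g : A →ₗ[R] B) (a : A) :
    quotSMulTopMap f g (Submodule.Quotient.mk a) = Submodule.Quotient.mk (g a) :=
  rfl

lemma IsShortExact.quotSMulTopMap {i : A →ₗ[R] B} {p : B →ₗ[R] C} (h : IsShortExact i p)
    (hC : IsSMulRegular C f) : IsShortExact (quotSMulTopMap f i) (quotSMulTopMap f p) where
  injective := by
    refine (injective_iff_map_eq_zero _).2 fun z hz => ?_
    obtain ⟨a, rfl⟩ := Submodule.Quotient.mk_surjective _ z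
    rw [quotSMulTopMap_mk, mk_quotSMulTop_eq_zero_iff] at hz
    obtain ⟨b, hb⟩ := hz
    have hpb : p b = 0 := hC.right_eq_zero_of_smul <| by
      rw [← map_smul, hb, h.exact.apply_apply_eq_zero]
    obtain ⟨a', rfl⟩ := (h.exact b).1 hpb
    exact mk_quotSMulTop_eq_zero_iff.2 ⟨a', h.injective ((map_smul i f a').trans hb)⟩
  exact := QuotSMulTop.map_exact f h.exact h.surjective
  surjective := QuotSMulTop.map_surjective f h.surjective

lemma isSMulRegular_of_free [Module.Free R A] (hf : IsSMulRegular R f) : IsSMulRegular A f := by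
  refine fun x y hxy => (Module.Free.chooseBasis R A).repr.injective (Finsupp.ext fun i => hf ?_)
  simpa only [map_smul, Finsupp.smul_apply] using
    DFunLike.congr_fun (congrArg (Module.Free.chooseBasis R A).repr hxy) i

variable (R K) in
lemma exists_free_surjective : ∃ (F : Type u) (_ : AddCommGroup F) (_ : Module R F)
    (_ : Module.Free R F) (p : F →ₗ[R] K), Function.Surjective p :=
  ⟨K →₀ R, inferInstance, inferInstance, inferInstance, Finsupp.linearCombination R id,
    Finsupp.linearCombination_id_surjective R K⟩

lemma isShortExact_ker_subtype {g : A →ₗ[R] B} (hg : Function.Surjective g) :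
    IsShortExact (LinearMap.ker g).subtype g :=
  ⟨Subtype.val_injective, LinearMap.exact_subtype_ker_map g, hg⟩

lemma extIsZero_one_quotSMulTop_iff (hK : IsSMulRegular K f) :
    ExtIsZero (R ⧸ Ideal.span {f}) (QuotSMulTop f K) N 1 ↔ ExtIsZero R K N 1 := by
  obtain ⟨F, _, _, _, p, hp⟩ := exists_free_surjective R K
  have h := isShortExact_ker_subtype hp
  rw [(h.quotSMulTopMap hK).extIsZero_one_iff_extension, h.extIsZero_one_iff_extension]
  constructor
  · intro hext φ
    obtain ⟨φ', hφ'⟩ := exists_quotSMulTop_lift (f := f) φ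
    obtain ⟨ψ, rfl⟩ := hext φ'
    exact ⟨ψ.restrictScalars R ∘ₗ Submodule.mkQ _, LinearMap.ext hφ'⟩
  · intro hext φ
    obtain ⟨ψ, hψ⟩ := hext (φ.restrictScalars R ∘ₗ Submodule.mkQ _)
    obtain ⟨ψ', hψ'⟩ := exists_quotSMulTop_lift (f := f) ψ
    refine ⟨ψ', LinearMap.ext fun z => ?_⟩
    obtain ⟨a, rfl⟩ := Submodule.Quotient.mk_surjective _ z
    exact (hψ' _).trans (LinearMap.congr_fun hψ a)

lemma extIsZero_succ_quotSMulTop_iff (hf : IsSMulRegular R f) (hK : IsSMulRegular K f) (n : ℕ) :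
    ExtIsZero (R ⧸ Ideal.span {f}) (QuotSMulTop f K) N (n + 1) ↔ ExtIsZero R K N (n + 1) := by
  induction n generalizing K with
  | zero => exact extIsZero_one_quotSMulTop_iff hK
  | succ n ih =>
    obtain ⟨F, _, _, _, p, hp⟩ := exists_free_surjective R K
    have h := isShortExact_ker_subtype hp
    have hker := (isSMulRegular_of_free (A := F) hf).submodule (LinearMap.ker p) f
    exact ((h.quotSMulTopMap hK).dimension_shift_projective.trans (ih hker)).trans
      h.dimension_shift_projective.symm

section FourTerm

variable {p : A →ₗ[R] M} (hp : Function.Surjective p)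
include hp

lemma isShortExact_range_quotSMulTopMap_ker_subtype :
    ∃ q : QuotSMulTop f A →ₗ[R ⧸ Ideal.span {f}] M,
      IsShortExact (LinearMap.range (quotSMulTopMap f (LinearMap.ker p).subtype)).subtype q := by
  obtain ⟨q, hq⟩ := exists_quotSMulTop_lift (f := f) p
  refine ⟨q, Subtype.val_injective, fun z => ?_, fun m => ?_⟩
  · rw [Submodule.coe_subtype, Subtype.range_coe, SetLike.mem_coe]
    constructor
    · obtain ⟨a, rfl⟩ := Submodule.Quotient.mk_surjective _ z
      exact fun ha => ⟨Submodule.Quotient.mk ⟨a, (hq a).symm.trans ha⟩, rfl⟩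
    · rintro ⟨y, rfl⟩
      obtain ⟨a, rfl⟩ := Submodule.Quotient.mk_surjective _ y
      exact (hq a).trans a.2
  · obtain ⟨a, rfl⟩ := hp m
    exact ⟨_, hq a⟩

-- The snake lemma for multiplication by `f`: the connecting map sends `p a` to the class of `f a`.
lemma exists_quotSMulTop_connecting :
    ∃ t : M →ₗ[R ⧸ Ideal.span {f}] QuotSMulTop f (LinearMap.ker p),
      ∀ (a : A) (k : LinearMap.ker p), f • a = k → t (p a) = Submodule.Quotient.mk k := by
  have hfa (a : A) : f • a ∈ LinearMap.ker p := by
    rw [LinearMap.mem_ker, map_smul, smul_eq_zero_of_quotient_span_singleton]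
  let μ : A →ₗ[R] QuotSMulTop f (LinearMap.ker p) :=
    Submodule.mkQ _ ∘ₗ (LinearMap.lsmul R A f).codRestrict _ hfa
  have hμ : LinearMap.ker p ≤ LinearMap.ker μ := fun k hk =>
    mk_quotSMulTop_eq_zero_iff.2 ⟨⟨k, hk⟩, rfl⟩
  let t := (LinearMap.ker p).liftQ μ hμ ∘ₗ (p.quotKerEquivOfSurjective hp).symm.toLinearMap
  refine ⟨t.extendScalarsOfSurjective Ideal.Quotient.mk_surjective, fun a k hak => ?_⟩
  have hpa : (p.quotKerEquivOfSurjective hp).symm (p a) = Submodule.Quotient.mk a :=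
    (LinearEquiv.symm_apply_eq _).2 (p.quotKerEquivOfSurjective_apply_mk hp a).symm
  exact (congrArg _ hpa).trans (congrArg Submodule.Quotient.mk (Subtype.ext hak))

lemma exists_isShortExact_quotSMulTopMap_rangeRestrict (hA : IsSMulRegular A f) :
    ∃ t : M →ₗ[R ⧸ Ideal.span {f}] QuotSMulTop f (LinearMap.ker p),
      IsShortExact t (quotSMulTopMap f (LinearMap.ker p).subtype).rangeRestrict := by
  obtain ⟨t, ht⟩ := exists_quotSMulTop_connecting (f := f) hp
  have hfa (a : A) : f • a ∈ LinearMap.ker p := by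
    rw [LinearMap.mem_ker, map_smul, smul_eq_zero_of_quotient_span_singleton]
  refine ⟨t, (injective_iff_map_eq_zero _).2 fun m hm => ?_, fun z => ?_,
    LinearMap.surjective_rangeRestrict _⟩
  · obtain ⟨a, rfl⟩ := hp m
    rw [ht a ⟨_, hfa a⟩ rfl, mk_quotSMulTop_eq_zero_iff] at hm
    obtain ⟨k, hk⟩ := hm
    obtain rfl : (k : A) = a := hA (congrArg Subtype.val hk)
    exact k.2
  · obtain ⟨k, rfl⟩ := Submodule.Quotient.mk_surjective _ z
    rw [Subtype.ext_iff]
    change (Submodule.Quotient.mk (k : A) : QuotSMulTop f A) = 0 ↔ _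
    rw [mk_quotSMulTop_eq_zero_iff]
    constructor
    · rintro ⟨a, ha⟩
      exact ⟨p a, ht a k ha⟩
    · rintro ⟨m, hm⟩
      obtain ⟨a, rfl⟩ := hp m
      rw [ht a ⟨_, hfa a⟩ rfl] at hm
      have := congrArg (quotSMulTopMap f (LinearMap.ker p).subtype) hm
      exact mk_quotSMulTop_eq_zero_iff.1
        (this.symm.trans (mk_quotSMulTop_eq_zero_iff.2 ⟨a, rfl⟩))

end FourTerm

end QuotientByElement

/-! ### Change of rings: torsion of injective presentations -/

section Torsion

variable {R : Type u} [CommRing R] {f : R} {A B C M N : Type u}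
  [AddCommGroup A] [Module R A] [AddCommGroup B] [Module R B] [AddCommGroup C] [Module R C]
  [AddCommGroup M] [Module R M] [Module (R ⧸ Ideal.span {f}) M]
  [IsScalarTower R (R ⧸ Ideal.span {f}) M]
  [AddCommGroup N] [Module R N] [Module (R ⧸ Ideal.span {f}) N]
  [IsScalarTower R (R ⧸ Ideal.span {f}) N]

/-- An `R`-linear map from an `R ⧸ (f)`-module, corestricted to the `f`-torsion. -/
def torsionByLift (f : R) [Module (R ⧸ Ideal.span {f}) N] [IsScalarTower R (R ⧸ Ideal.span {f}) N]
    (φ : N →ₗ[R] A) : N →ₗ[R ⧸ Ideal.span {f}] Submodule.torsionBy R A f :=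
  (φ.codRestrict (Submodule.torsionBy R A f) fun n => by
    rw [Submodule.mem_torsionBy_iff, ← map_smul, smul_eq_zero_of_quotient_span_singleton,
      map_zero]).extendScalarsOfSurjective Ideal.Quotient.mk_surjective

/-- The `R ⧸ (f)`-linear map on `f`-torsion induced by an `R`-linear map. -/
def torsionByMap (f : R) (g : A →ₗ[R] B) :
    Submodule.torsionBy R A f →ₗ[R ⧸ Ideal.span {f}] Submodule.torsionBy R B f :=
  torsionByLift f (g ∘ₗ (Submodule.torsionBy R A f).subtype)

lemma IsShortExact.torsionByMap {i : A →ₗ[R] B} {p : B →ₗ[R] C} (h : IsShortExact i p)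
    (hA : Function.Surjective fun a : A => f • a) :
    IsShortExact (torsionByMap f i) (torsionByMap f p) where
  injective _ _ hxy := Subtype.ext (h.injective (congrArg Subtype.val hxy))
  exact b := by
    rw [Subtype.ext_iff]
    refine (h.exact b).trans ⟨?_, fun ⟨a, ha⟩ => ⟨a, congrArg Subtype.val ha⟩⟩
    rintro ⟨a, ha⟩
    have hfa : f • a = 0 := h.injective <| by
      rw [map_smul, ha, map_zero]
      exact b.2
    exact ⟨⟨a, hfa⟩, Subtype.ext ha⟩
  surjective c := by
    obtain ⟨b, hb⟩ := h.surjective c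
    obtain ⟨a, ha⟩ := (h.exact (f • b)).1 <| by
      rw [map_smul, hb]
      exact c.2
    obtain ⟨a, rfl⟩ := hA a
    refine ⟨⟨b - i a, ?_⟩, Subtype.ext ?_⟩
    · rw [Submodule.mem_torsionBy_iff, smul_sub, ← ha, map_smul, sub_self]
    · exact (map_sub p b (i a)).trans (by rw [hb, h.exact.apply_apply_eq_zero, sub_zero])

instance [Module.Injective R A] :
    Module.Injective (R ⧸ Ideal.span {f}) (Submodule.torsionBy R A f) where
  out X Y _ _ _ _ i hi g := by
    let : Module R X := Module.compHom X (algebraMap R (R ⧸ Ideal.span {f}))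
    let : Module R Y := Module.compHom Y (algebraMap R (R ⧸ Ideal.span {f}))
    have : IsScalarTower R (R ⧸ Ideal.span {f}) X := .of_algebraMap_smul fun _ _ => rfl
    have : IsScalarTower R (R ⧸ Ideal.span {f}) Y := .of_algebraMap_smul fun _ _ => rfl
    obtain ⟨h, hh⟩ := Module.Injective.out (i.restrictScalars R) hi
      ((Submodule.torsionBy R A f).subtype ∘ₗ g.restrictScalars R)
    exact ⟨torsionByLift f h, fun x => Subtype.ext (hh x)⟩

lemma smul_surjective_of_injective [Module.Injective R A] (hf : IsSMulRegular R f) :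
    Function.Surjective fun a : A => f • a := by
  intro a
  obtain ⟨h, hh⟩ :=
    Module.Injective.out (LinearMap.lsmul R R f) hf (LinearMap.toSpanSingleton R A a)
  refine ⟨h 1, ?_⟩
  simpa only [LinearMap.lsmul_apply, map_smul, LinearMap.toSpanSingleton_apply, one_smul] using hh 1

lemma smul_surjective_of_surjective {p : A →ₗ[R] B} (hp : Function.Surjective p)
    (hA : Function.Surjective fun a : A => f • a) : Function.Surjective fun b : B => f • b := by
  intro b
  obtain ⟨a, rfl⟩ := hp b
  obtain ⟨a, rfl⟩ := hA a
  exact ⟨p a, (map_smul p f a).symm⟩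

variable (R A) in
lemma exists_injective_embedding : ∃ (E : Type u) (_ : AddCommGroup E) (_ : Module R E)
    (_ : Module.Injective R E) (i : A →ₗ[R] E), Function.Injective i :=
  let E : ModuleCat.{u} R := Injective.under (ModuleCat.of R A)
  have : Injective (ModuleCat.of R E) := Injective.injective_under _
  ⟨E, inferInstance, inferInstance, Module.injective_module_of_injective_object R E,
    (Injective.ι (ModuleCat.of R A)).hom,
    (ModuleCat.mono_iff_injective _).1 (Injective.ι_mono _)⟩

lemma isShortExact_mkQ_range {i : A →ₗ[R] B} (hi : Function.Injective i) :
    IsShortExact i (LinearMap.range i).mkQ :=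
  ⟨hi, LinearMap.exact_map_mkQ_range i, Submodule.mkQ_surjective _⟩

lemma extIsZero_one_torsionBy_iff (hA : Function.Surjective fun a : A => f • a) :
    ExtIsZero (R ⧸ Ideal.span {f}) N (Submodule.torsionBy R A f) 1 ↔ ExtIsZero R N A 1 := by
  obtain ⟨E, _, _, _, i, hi⟩ := exists_injective_embedding R A
  have h := isShortExact_mkQ_range hi
  rw [(h.torsionByMap hA).extIsZero_one_iff_lift, h.extIsZero_one_iff_lift]
  constructor
  · intro hlift φ
    obtain ⟨ψ, hψ⟩ := hlift (torsionByLift f φ)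
    exact ⟨(Submodule.torsionBy R E f).subtype ∘ₗ ψ.restrictScalars R,
      LinearMap.ext fun x => congrArg Subtype.val (LinearMap.congr_fun hψ x)⟩
  · intro hlift φ
    obtain ⟨ψ, hψ⟩ := hlift ((Submodule.torsionBy R _ f).subtype ∘ₗ φ.restrictScalars R)
    exact ⟨torsionByLift f ψ, LinearMap.ext fun x => Subtype.ext (LinearMap.congr_fun hψ x)⟩

lemma extIsZero_succ_torsionBy_iff (hf : IsSMulRegular R f)
    (hA : Function.Surjective fun a : A => f • a) (n : ℕ) :
    ExtIsZero (R ⧸ Ideal.span {f}) N (Submodule.torsionBy R A f) (n + 1) ↔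
      ExtIsZero R N A (n + 1) := by
  induction n generalizing A with
  | zero => exact extIsZero_one_torsionBy_iff hA
  | succ n ih =>
    obtain ⟨E, _, _, _, i, hi⟩ := exists_injective_embedding R A
    have h := isShortExact_mkQ_range hi
    have hquot := smul_surjective_of_surjective h.surjective
      (smul_surjective_of_injective (A := E) hf)
    exact ((h.torsionByMap hA).dimension_shift_injective.trans (ih hquot)).trans
      h.dimension_shift_injective.symm

section FourTerm

variable {i : M →ₗ[R] A} (hi : Function.Injective i)
include hi

lemma isShortExact_torsionByMap_mkQ_rangeRestrict :
    IsShortExact (C := LinearMap.range (torsionByMap f (LinearMap.range i).mkQ))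
      (torsionByLift f i) (torsionByMap f (LinearMap.range i).mkQ).rangeRestrict where
  injective _ _ hxy := hi (congrArg Subtype.val hxy)
  exact a := by
    rw [Subtype.ext_iff, Subtype.ext_iff]
    exact ((isShortExact_mkQ_range hi).exact a).trans
      ⟨fun ⟨m, hm⟩ => ⟨m, Subtype.ext hm⟩, fun ⟨m, hm⟩ => ⟨m, congrArg Subtype.val hm⟩⟩
  surjective := LinearMap.surjective_rangeRestrict _

-- The snake lemma for multiplication by `f`: the connecting map sends the class of `a` to `f a`.
lemma exists_torsionBy_connecting :
    ∃ g : Submodule.torsionBy R (A ⧸ LinearMap.range i) f →ₗ[R ⧸ Ideal.span {f}] M,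
      ∀ (c : Submodule.torsionBy R (A ⧸ LinearMap.range i) f) (a : A),
        Submodule.Quotient.mk a = (c : A ⧸ LinearMap.range i) → i (g c) = f • a := by
  have hrange : LinearMap.range i ≤ LinearMap.ker (LinearMap.lsmul R A f) := by
    rintro _ ⟨m, rfl⟩
    rw [LinearMap.mem_ker, LinearMap.lsmul_apply, ← map_smul,
      smul_eq_zero_of_quotient_span_singleton, map_zero]
  let φ : A ⧸ LinearMap.range i →ₗ[R] A := (LinearMap.range i).liftQ _ hrange
  have hφ (c : Submodule.torsionBy R (A ⧸ LinearMap.range i) f) : φ c ∈ LinearMap.range i := by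
    obtain ⟨a, ha⟩ := Submodule.Quotient.mk_surjective _ (c : A ⧸ LinearMap.range i)
    rw [← Submodule.Quotient.mk_eq_zero, ← ha]
    exact (congrArg (f • ·) ha).trans c.2
  let g := (LinearEquiv.ofInjective i hi).symm.toLinearMap ∘ₗ
    (φ ∘ₗ Submodule.subtype _).codRestrict _ hφ
  refine ⟨g.extendScalarsOfSurjective Ideal.Quotient.mk_surjective, fun c a ha => ?_⟩
  have hg : i (g c) = φ c :=
    congrArg Subtype.val ((LinearEquiv.ofInjective i hi).apply_symm_apply ⟨φ c, hφ c⟩)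
  exact hg.trans (congrArg φ ha.symm)

lemma exists_isShortExact_torsionByMap_mkQ_range_subtype
    (hA : Function.Surjective fun a : A => f • a) :
    ∃ g : Submodule.torsionBy R (A ⧸ LinearMap.range i) f →ₗ[R ⧸ Ideal.span {f}] M,
      IsShortExact (LinearMap.range (torsionByMap f (LinearMap.range i).mkQ)).subtype g := by
  obtain ⟨g, hg⟩ := exists_torsionBy_connecting (f := f) hi
  refine ⟨g, Subtype.val_injective, fun c => ?_, fun m => ?_⟩
  · rw [Submodule.coe_subtype, Subtype.range_coe, SetLike.mem_coe]
    constructor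
    · intro hc
      obtain ⟨a, ha⟩ := Submodule.Quotient.mk_surjective _ (c : A ⧸ LinearMap.range i)
      have hfa : f • a = 0 := by rw [← hg c a ha, hc, map_zero]
      exact ⟨⟨a, hfa⟩, Subtype.ext ha⟩
    · rintro ⟨a, rfl⟩
      exact hi ((hg _ a rfl).trans (a.2.trans (map_zero i).symm))
  · obtain ⟨a, ha⟩ := hA (i m)
    have hfa : f • (Submodule.Quotient.mk a : A ⧸ LinearMap.range i) = 0 :=
      (Submodule.Quotient.mk_eq_zero _).2 ⟨m, ha.symm⟩
    exact ⟨⟨_, hfa⟩, hi ((hg _ a rfl).trans ha)⟩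

end FourTerm

end Torsion

/-! ### Descent of finite homological dimension -/

section Nilpotence

variable {𝒞 : Type*} [Category 𝒞] [Abelian 𝒞] [HasExt 𝒞] {X Y : 𝒞} {p q n : ℕ}

-- If `χ` acts injectively in large degrees then so does each of its powers, one of which is zero.
lemma ext_subsingleton_of_comp_left_injective (χ : Ext X X p)
    (hχ : ∀ i j, q ≤ i → ∀ (h : p + i = j) (e : Ext X Y i), χ.comp e h = 0 → e = 0)
    (hX : Subsingleton (Ext X X (n * p))) {i : ℕ} (hi : q ≤ i) : Subsingleton (Ext X Y i) := by
  have hpow (k m : ℕ) (hm : k * p = m) : ∃ ξ : Ext X X m, ∀ i j, q ≤ i →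
      ∀ (h : m + i = j) (e : Ext X Y i), ξ.comp e h = 0 → e = 0 := by
    induction k generalizing m with
    | zero =>
      obtain rfl : m = 0 := by rw [← hm, zero_mul]
      refine ⟨Ext.mk₀ (𝟙 X), fun i j _ h e he => ?_⟩
      obtain rfl : i = j := by omega
      rwa [Ext.mk₀_id_comp] at he
    | succ k ih =>
      obtain ⟨ξ, hξ⟩ := ih _ rfl
      refine ⟨χ.comp ξ (by rw [← hm, add_one_mul, add_comm]), fun i j hi h e he =>
        hξ i _ hi rfl e (hχ (k * p + i) j (by omega) (by rw [← h, ← hm]; ring) _ ?_)⟩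
      rwa [← Ext.comp_assoc _ _ _ _ _ (by rw [← h, ← hm]; ring)]
  obtain ⟨ξ, hξ⟩ := hpow n _ rfl
  refine ⟨fun a b => sub_eq_zero.1 (hξ i _ hi rfl _ ?_)⟩
  rw [Subsingleton.elim ξ 0, Ext.zero_comp]

lemma ext_subsingleton_of_comp_right_injective (χ : Ext X X p)
    (hχ : ∀ i j, q ≤ i → ∀ (h : i + p = j) (e : Ext Y X i), e.comp χ h = 0 → e = 0)
    (hX : Subsingleton (Ext X X (n * p))) {i : ℕ} (hi : q ≤ i) : Subsingleton (Ext Y X i) := by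
  have hpow (k m : ℕ) (hm : k * p = m) : ∃ ξ : Ext X X m, ∀ i j, q ≤ i →
      ∀ (h : i + m = j) (e : Ext Y X i), e.comp ξ h = 0 → e = 0 := by
    induction k generalizing m with
    | zero =>
      obtain rfl : m = 0 := by rw [← hm, zero_mul]
      refine ⟨Ext.mk₀ (𝟙 X), fun i j _ h e he => ?_⟩
      obtain rfl : i = j := by omega
      rwa [Ext.comp_mk₀_id] at he
    | succ k ih =>
      obtain ⟨ξ, hξ⟩ := ih _ rfl
      refine ⟨ξ.comp χ (by rw [← hm, add_one_mul]), fun i j hi h e he =>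
        hξ i _ hi rfl e (hχ (i + k * p) j (by omega) (by rw [← h, ← hm]; ring) _ ?_)⟩
      rwa [Ext.comp_assoc _ _ _ _ _ (by rw [← h, ← hm]; ring)]
  obtain ⟨ξ, hξ⟩ := hpow n _ rfl
  refine ⟨fun a b => sub_eq_zero.1 (hξ i _ hi rfl _ ?_)⟩
  rw [Subsingleton.elim ξ 0, Ext.comp_zero]

end Nilpotence

section Operator

variable {R : Type u} [CommRing R] {A B C X : Type u} [AddCommGroup A] [Module R A]
  [AddCommGroup B] [Module R B] [AddCommGroup C] [Module R C] [AddCommGroup X] [Module R X]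

namespace IsShortExact

variable {f : A →ₗ[R] B} {g : B →ₗ[R] C} (h : IsShortExact f g)
include h

lemma exists_ext_comp_left_injective : ∃ δ : Ext (ModuleCat.of R C) (ModuleCat.of R A) 1,
    ∀ i j, ExtIsZero R B X i → ∀ (hij : 1 + i = j)
      (e : Ext (ModuleCat.of R A) (ModuleCat.of R X) i), δ.comp e hij = 0 → e = 0 := by
  refine ⟨h.shortExact.extClass, fun i j hB hij e he => ?_⟩
  obtain ⟨y, rfl⟩ := Ext.contravariant_sequence_exact₁ h.shortExact _ e hij he
  rw [hB.eq_zero y, Ext.comp_zero]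

lemma exists_ext_comp_right_injective : ∃ δ : Ext (ModuleCat.of R C) (ModuleCat.of R A) 1,
    ∀ i j, ExtIsZero R X B i → ∀ (hij : i + 1 = j)
      (e : Ext (ModuleCat.of R X) (ModuleCat.of R C) i), e.comp δ hij = 0 → e = 0 := by
  refine ⟨h.shortExact.extClass, fun i j hB hij e he => ?_⟩
  obtain ⟨y, rfl⟩ := Ext.covariant_sequence_exact₃ _ h.shortExact e hij he
  rw [hB.eq_zero y, Ext.zero_comp]

end IsShortExact

variable {f : R} (hf : IsSMulRegular R f) {M N : Type u}
  [AddCommGroup M] [Module R M] [Module (R ⧸ Ideal.span {f}) M]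
  [IsScalarTower R (R ⧸ Ideal.span {f}) M]
  [AddCommGroup N] [Module R N] [Module (R ⧸ Ideal.span {f}) N]
  [IsScalarTower R (R ⧸ Ideal.span {f}) N]
include hf

variable (M N) in
-- Eisenbud's operator: the splice of the two halves of the change of rings sequence of `M`.
lemma exists_eisenbud_operator_left :
    ∃ χ : Ext (ModuleCat.of (R ⧸ Ideal.span {f}) M) (ModuleCat.of (R ⧸ Ideal.span {f}) M) 2,
      ∀ i j, 1 ≤ i → ExtIsZero R M N (i + 1) → ∀ (h : 2 + i = j)
        (e : Ext (ModuleCat.of (R ⧸ Ideal.span {f}) M) (ModuleCat.of (R ⧸ Ideal.span {f}) N) i),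
        χ.comp e h = 0 → e = 0 := by
  obtain ⟨F, _, _, _, p, hp⟩ := exists_free_surjective R M
  have hF : IsSMulRegular F f := isSMulRegular_of_free hf
  obtain ⟨_, hlower⟩ := isShortExact_range_quotSMulTopMap_ker_subtype (f := f) hp
  obtain ⟨_, hupper⟩ := exists_isShortExact_quotSMulTopMap_rangeRestrict hp hF
  obtain ⟨δ, hδ⟩ := hlower.exists_ext_comp_left_injective (X := N)
  obtain ⟨ε, hε⟩ := hupper.exists_ext_comp_left_injective (X := N)
  refine ⟨δ.comp ε rfl, fun i j hi hMN h e he => ?_⟩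
  obtain ⟨i, rfl⟩ := Nat.exists_eq_add_of_le' hi
  have hlower_zero : ExtIsZero (R ⧸ Ideal.span {f}) (QuotSMulTop f F) N (i + 2) :=
    (extIsZero_succ_quotSMulTop_iff hf hF _).2 (extIsZero_succ_of_projective _)
  have hupper_zero : ExtIsZero (R ⧸ Ideal.span {f}) (QuotSMulTop f (LinearMap.ker p)) N (i + 1) :=
    (extIsZero_succ_quotSMulTop_iff hf (hF.submodule _ f) _).2
      ((isShortExact_ker_subtype hp).dimension_shift_projective.1 hMN)
  refine hε _ (i + 2) hupper_zero (by omega) e (hδ _ j hlower_zero (by omega) _ ?_)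
  rwa [← Ext.comp_assoc _ _ _ _ _ (by omega)]

variable (M N) in
lemma exists_eisenbud_operator_right :
    ∃ χ : Ext (ModuleCat.of (R ⧸ Ideal.span {f}) M) (ModuleCat.of (R ⧸ Ideal.span {f}) M) 2,
      ∀ i j, 1 ≤ i → ExtIsZero R N M (i + 1) → ∀ (h : i + 2 = j)
        (e : Ext (ModuleCat.of (R ⧸ Ideal.span {f}) N) (ModuleCat.of (R ⧸ Ideal.span {f}) M) i),
        e.comp χ h = 0 → e = 0 := by
  obtain ⟨E, _, _, _, i, hi⟩ := exists_injective_embedding R M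
  have hE : Function.Surjective fun a : E => f • a := smul_surjective_of_injective hf
  have hC := smul_surjective_of_surjective (LinearMap.range i).mkQ_surjective hE
  obtain ⟨_, hlower⟩ := exists_isShortExact_torsionByMap_mkQ_range_subtype hi hE
  have hupper := isShortExact_torsionByMap_mkQ_rangeRestrict (f := f) hi
  obtain ⟨δ, hδ⟩ := hlower.exists_ext_comp_right_injective (X := N)
  obtain ⟨ε, hε⟩ := hupper.exists_ext_comp_right_injective (X := N)
  refine ⟨δ.comp ε rfl, fun n j hn hNM h e he => ?_⟩
  obtain ⟨n, rfl⟩ := Nat.exists_eq_add_of_le' hn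
  have hlower_zero : ExtIsZero (R ⧸ Ideal.span {f}) N
      (Submodule.torsionBy R (E ⧸ LinearMap.range i) f) (n + 1) :=
    (extIsZero_succ_torsionBy_iff hf hC _).2
      ((isShortExact_mkQ_range hi).dimension_shift_injective.1 hNM)
  have hupper_zero : ExtIsZero (R ⧸ Ideal.span {f}) N (Submodule.torsionBy R E f) (n + 2) :=
    (extIsZero_succ_torsionBy_iff hf hE _).2 (extIsZero_succ_of_injective _)
  refine hδ _ (n + 2) hlower_zero (by omega) e (hε _ j hupper_zero (by omega) _ ?_)
  rwa [Ext.comp_assoc _ _ _ _ _ (by omega)]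

lemma extIsZero_quotient_of_extIsZero_left {n q : ℕ} (hq : 1 ≤ q)
    (hself : ExtIsZero (R ⧸ Ideal.span {f}) M M (n * 2))
    (hMN : ∀ i, q ≤ i → ExtIsZero R M N i) {i : ℕ} (hi : q ≤ i) :
    ExtIsZero (R ⧸ Ideal.span {f}) M N i := by
  obtain ⟨χ, hχ⟩ := exists_eisenbud_operator_left hf M N
  exact ext_subsingleton_of_comp_left_injective χ
    (fun i j hi => hχ i j (hq.trans hi) (hMN _ (by omega))) hself hi

lemma extIsZero_quotient_of_extIsZero_right {n q : ℕ} (hq : 1 ≤ q)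
    (hself : ExtIsZero (R ⧸ Ideal.span {f}) M M (n * 2))
    (hNM : ∀ i, q ≤ i → ExtIsZero R N M i) {i : ℕ} (hi : q ≤ i) :
    ExtIsZero (R ⧸ Ideal.span {f}) N M i := by
  obtain ⟨χ, hχ⟩ := exists_eisenbud_operator_right hf M N
  exact ext_subsingleton_of_comp_right_injective χ
    (fun i j hi => hχ i j (hq.trans hi) (hNM _ (by omega))) hself hi

lemma extIsZero_of_extIsZero_quotient {n : ℕ}
    (h₁ : ExtIsZero (R ⧸ Ideal.span {f}) M N (n + 1))
    (h₂ : ExtIsZero (R ⧸ Ideal.span {f}) M N (n + 2)) : ExtIsZero R M N (n + 2) := by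
  obtain ⟨F, _, _, _, p, hp⟩ := exists_free_surjective R M
  have hF : IsSMulRegular F f := isSMulRegular_of_free hf
  obtain ⟨_, hlower⟩ := isShortExact_range_quotSMulTopMap_ker_subtype (f := f) hp
  obtain ⟨_, hupper⟩ := exists_isShortExact_quotSMulTopMap_rangeRestrict hp hF
  have hF_zero : ExtIsZero (R ⧸ Ideal.span {f}) (QuotSMulTop f F) N (n + 1) :=
    (extIsZero_succ_quotSMulTop_iff hf hF _).2 (extIsZero_succ_of_projective _)
  exact (isShortExact_ker_subtype hp).dimension_shift_projective.2
    ((extIsZero_succ_quotSMulTop_iff hf (hF.submodule _ f) _).1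
      (hupper.contravariant₂ h₁ (hlower.contravariant₁ hF_zero h₂)))

end Operator

/-! ### Quotients by a regular sequence -/

section RestrictScalars

variable {A S : Type u} [CommRing A] [CommRing S] [Algebra A S] {K M N P : Type u}
  [AddCommGroup K] [Module S K] [Module A K] [IsScalarTower A S K]
  [AddCommGroup M] [Module S M] [Module A M] [IsScalarTower A S M]
  [AddCommGroup N] [Module S N] [Module A N] [IsScalarTower A S N]
  [AddCommGroup P] [Module S P] [Module A P] [IsScalarTower A S P]

variable (A) in
lemma IsShortExact.restrictScalars {f : M →ₗ[S] N} {g : N →ₗ[S] P} (h : IsShortExact f g) :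
    IsShortExact (f.restrictScalars A) (g.restrictScalars A) :=
  ⟨h.injective, h.exact, h.surjective⟩

lemma extIsZero_succ_restrictScalars_iff (hAS : Function.Bijective (algebraMap A S)) (n : ℕ) :
    ExtIsZero A K N (n + 1) ↔ ExtIsZero S K N (n + 1) := by
  induction n generalizing K with
  | zero =>
    obtain ⟨F, _, _, _, p, hp⟩ := exists_free_surjective S K
    let : Module A F := Module.compHom F (algebraMap A S)
    have : IsScalarTower A S F := .of_algebraMap_smul fun _ _ => rfl
    have : Module.Free A S := .of_equiv (LinearEquiv.ofBijective (Algebra.linearMap A S) hAS)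
    have : Module.Free A F := .trans (S := S)
    have h := isShortExact_ker_subtype hp
    rw [h.extIsZero_one_iff_extension, (h.restrictScalars A).extIsZero_one_iff_extension]
    constructor
    · intro hext φ
      obtain ⟨ψ, hψ⟩ := hext (φ.restrictScalars A)
      exact ⟨ψ.extendScalarsOfSurjective hAS.2, LinearMap.ext fun x => LinearMap.congr_fun hψ x⟩
    · intro hext φ
      obtain ⟨ψ, hψ⟩ := hext (φ.extendScalarsOfSurjective hAS.2)
      exact ⟨ψ.restrictScalars A, LinearMap.ext fun x => LinearMap.congr_fun hψ x⟩
  | succ n ih =>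
    obtain ⟨F, _, _, _, p, hp⟩ := exists_free_surjective S K
    let : Module A F := Module.compHom F (algebraMap A S)
    have : IsScalarTower A S F := .of_algebraMap_smul fun _ _ => rfl
    have : Module.Free A S := .of_equiv (LinearEquiv.ofBijective (Algebra.linearMap A S) hAS)
    have : Module.Free A F := .trans (S := S)
    have h := isShortExact_ker_subtype hp
    exact ((h.restrictScalars A).dimension_shift_projective.trans ih).trans
      h.dimension_shift_projective.symm

end RestrictScalars

section Deformation

variable {A S : Type u} [CommRing A] [CommRing S] [Algebra A S]

/-- `S` is the quotient of `A` by the weakly regular sequence `fs`. The quotient is only required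
up to isomorphism, so that it can be reached by dividing by one element of `fs` at a time. -/
structure IsQuotientByRegularSequence (A S : Type u) [CommRing A] [CommRing S] [Algebra A S]
    (fs : List A) : Prop where
  isWeaklyRegular : IsWeaklyRegular A fs
  surjective : Function.Surjective (algebraMap A S)
  ker_eq : RingHom.ker (algebraMap A S) = Ideal.ofList fs

namespace IsQuotientByRegularSequence

lemma bijective (h : IsQuotientByRegularSequence A S []) :
    Function.Bijective (algebraMap A S) :=
  ⟨(RingHom.injective_iff_ker_eq_bot _).2 (h.ker_eq.trans Ideal.ofList_nil), h.surjective⟩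

variable {f : A} {fs : List A} (h : IsQuotientByRegularSequence A S (f :: fs))
include h

lemma isSMulRegular : IsSMulRegular A f :=
  ((isWeaklyRegular_cons_iff A f fs).1 h.isWeaklyRegular).1

lemma isWeaklyRegular_map_quotient :
    IsWeaklyRegular (A ⧸ Ideal.span {f})
      (fs.map (algebraMap A (A ⧸ Ideal.span {f}))) := by
  have hspan : f • (⊤ : Submodule A A) = Ideal.span {f} := by
    rw [← Submodule.ideal_span_singleton_smul, Ideal.smul_top_eq_map]
    simp
  rw [isWeaklyRegular_map_algebraMap_iff,
    ← (Submodule.quotEquivOfEq _ _ hspan).isWeaklyRegular_congr]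
  exact ((isWeaklyRegular_cons_iff A f fs).1 h.isWeaklyRegular).2

lemma exists_algebra_quotient :
    ∃ _ : Algebra (A ⧸ Ideal.span {f}) S, IsScalarTower A (A ⧸ Ideal.span {f}) S ∧
      IsQuotientByRegularSequence (A ⧸ Ideal.span {f}) S
        (fs.map (algebraMap A (A ⧸ Ideal.span {f}))) := by
  have hf (a : A) (ha : a ∈ Ideal.span {f}) : algebraMap A S a = 0 := by
    rw [← RingHom.mem_ker, h.ker_eq, Ideal.ofList_cons]
    exact Ideal.mem_sup_left ha
  let π := Ideal.Quotient.lift (Ideal.span {f}) (algebraMap A S) hf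
  let := π.toAlgebra
  refine ⟨π.toAlgebra, .of_algebraMap_eq fun _ => rfl, h.isWeaklyRegular_map_quotient,
    Ideal.Quotient.lift_surjective_of_surjective _ hf h.surjective,
    (Ideal.ker_quotient_lift (algebraMap A S) hf).trans ?_⟩
  rw [h.ker_eq, Ideal.ofList_cons, Ideal.map_sup, Ideal.map_ofList, Ideal.map_quotient_self,
    bot_sup_eq, Ideal.Quotient.algebraMap_eq]

end IsQuotientByRegularSequence

lemma exists_module_isScalarTower (A B S : Type u) [CommRing A] [CommRing B] [CommRing S]
    [Algebra A S] [Algebra A B] [Algebra B S] [IsScalarTower A B S]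
    (M : Type u) [AddCommGroup M] [Module S M] [Module A M] [IsScalarTower A S M] :
    ∃ _ : Module B M, IsScalarTower A B M ∧ IsScalarTower B S M := by
  let : Module B M := Module.compHom M (algebraMap B S)
  have : IsScalarTower B S M := .of_algebraMap_smul fun _ _ => rfl
  refine ⟨inferInstance, .of_algebraMap_smul fun a x => ?_, this⟩
  rw [← algebraMap_smul S (algebraMap A B a) x, ← IsScalarTower.algebraMap_apply, algebraMap_smul]

namespace IsQuotientByRegularSequence

variable {A : Type u} [CommRing A] [Algebra A S] {fs : List A}
  (hfs : IsQuotientByRegularSequence A S fs) {M N : Type u}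
  [AddCommGroup M] [Module S M] [Module A M] [IsScalarTower A S M]
  [AddCommGroup N] [Module S N] [Module A N] [IsScalarTower A S N] {a b q i : ℕ}
include hfs

lemma extIsZero_of_window (ha : 1 ≤ a) (hMN : ∀ i, a ≤ i → i ≤ b → ExtIsZero S M N i)
    (hai : a + fs.length ≤ i) (hib : i ≤ b) : ExtIsZero A M N i := by
  induction hn : fs.length generalizing A i with
  | zero =>
    obtain rfl := List.length_eq_zero_iff.1 hn
    obtain ⟨i, rfl⟩ := Nat.exists_eq_add_of_le' (show 1 ≤ i by omega)
    exact (extIsZero_succ_restrictScalars_iff hfs.bijective i).2 (hMN _ (by omega) hib)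
  | succ n ih =>
    obtain ⟨f, fs, rfl⟩ := List.exists_cons_of_length_eq_add_one hn
    obtain ⟨_, _, hquot⟩ := hfs.exists_algebra_quotient
    obtain ⟨_, _, _⟩ := exists_module_isScalarTower A (A ⧸ Ideal.span {f}) S M
    obtain ⟨_, _, _⟩ := exists_module_isScalarTower A (A ⧸ Ideal.span {f}) S N
    have hlen : (fs.map (algebraMap A (A ⧸ Ideal.span {f}))).length = n := by simpa using hn
    obtain ⟨i, rfl⟩ := Nat.exists_eq_add_of_le' (show 2 ≤ i by omega)
    exact extIsZero_of_extIsZero_quotient hfs.isSMulRegular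
      (ih hquot (by omega) (by omega) hlen) (ih hquot (by omega) (by omega) hlen)

lemma extIsZero_of_base_left (ha : 1 ≤ a)
    (hMM : ∀ i, a ≤ i → i ≤ a + fs.length → ExtIsZero S M M i) (hq : 1 ≤ q)
    (hMN : ∀ i, q ≤ i → ExtIsZero A M N i) (hi : q ≤ i) : ExtIsZero S M N i := by
  induction hn : fs.length generalizing A with
  | zero =>
    obtain rfl := List.length_eq_zero_iff.1 hn
    obtain ⟨i, rfl⟩ := Nat.exists_eq_add_of_le' (show 1 ≤ i by omega)
    exact (extIsZero_succ_restrictScalars_iff hfs.bijective i).1 (hMN _ hi)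
  | succ n ih =>
    obtain ⟨f, fs, rfl⟩ := List.exists_cons_of_length_eq_add_one hn
    obtain ⟨_, _, hquot⟩ := hfs.exists_algebra_quotient
    obtain ⟨_, _, _⟩ := exists_module_isScalarTower A (A ⧸ Ideal.span {f}) S M
    obtain ⟨_, _, _⟩ := exists_module_isScalarTower A (A ⧸ Ideal.span {f}) S N
    have hlen : (fs.map (algebraMap A (A ⧸ Ideal.span {f}))).length = n := by simpa using hn
    have heven : ExtIsZero (A ⧸ Ideal.span {f}) M M ((a + n + 1) / 2 * 2) :=
      hquot.extIsZero_of_window ha hMM (by omega) (by omega)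
    exact ih hquot (fun i hai hi => hMM i hai (by omega)) (fun i hi =>
      extIsZero_quotient_of_extIsZero_left hfs.isSMulRegular hq heven hMN hi) hlen

lemma extIsZero_of_base_right (ha : 1 ≤ a)
    (hMM : ∀ i, a ≤ i → i ≤ a + fs.length → ExtIsZero S M M i) (hq : 1 ≤ q)
    (hNM : ∀ i, q ≤ i → ExtIsZero A N M i) (hi : q ≤ i) : ExtIsZero S N M i := by
  induction hn : fs.length generalizing A with
  | zero =>
    obtain rfl := List.length_eq_zero_iff.1 hn
    obtain ⟨i, rfl⟩ := Nat.exists_eq_add_of_le' (show 1 ≤ i by omega)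
    exact (extIsZero_succ_restrictScalars_iff hfs.bijective i).1 (hNM _ hi)
  | succ n ih =>
    obtain ⟨f, fs, rfl⟩ := List.exists_cons_of_length_eq_add_one hn
    obtain ⟨_, _, hquot⟩ := hfs.exists_algebra_quotient
    obtain ⟨_, _, _⟩ := exists_module_isScalarTower A (A ⧸ Ideal.span {f}) S M
    obtain ⟨_, _, _⟩ := exists_module_isScalarTower A (A ⧸ Ideal.span {f}) S N
    have hlen : (fs.map (algebraMap A (A ⧸ Ideal.span {f}))).length = n := by simpa using hn
    have heven : ExtIsZero (A ⧸ Ideal.span {f}) M M ((a + n + 1) / 2 * 2) :=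
      hquot.extIsZero_of_window ha hMM (by omega) (by omega)
    exact ih hquot (fun i hai hi => hMM i hai (by omega)) (fun i hi =>
      extIsZero_quotient_of_extIsZero_right hfs.isSMulRegular hq heven hNM hi) hlen

end IsQuotientByRegularSequence

end Deformation

/-! ### Regular sequences and Ext -/

section RegularSequence

variable {R : Type u} [CommRing R] {x : R} {xs : List R} {A L F X Y : Type u}
  [AddCommGroup A] [Module R A] [AddCommGroup L] [Module R L] [AddCommGroup F] [Module R F]
  [AddCommGroup X] [Module R X] [AddCommGroup Y] [Module R Y] {n q : ℕ}

/-- The quotient `A ⧸ xs A` by a list of ring elements, the analogue of `QuotSMulTop` for a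
single element. -/
abbrev QuotListSMulTop (xs : List R) (A : Type u) [AddCommGroup A] [Module R A] : Type u :=
  A ⧸ (Ideal.ofList xs • ⊤ : Submodule R A)

/-- The identification `A ⧸ [] A ≃ A`. -/
noncomputable def quotListSMulTopNil (R : Type u) [CommRing R] (A : Type u) [AddCommGroup A]
    [Module R A] : QuotListSMulTop ([] : List R) A ≃ₗ[R] A :=
  Submodule.quotEquivOfEqBot _ (by rw [Ideal.ofList_nil, Submodule.bot_smul])

/-- The identification `A ⧸ (x :: xs) A ≃ (A ⧸ xA) ⧸ xs (A ⧸ xA)`. -/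
noncomputable def quotListSMulTopCons (x : R) (xs : List R) (A : Type u) [AddCommGroup A]
    [Module R A] : QuotListSMulTop (x :: xs) A ≃ₗ[R] QuotListSMulTop xs (QuotSMulTop x A) :=
  Submodule.quotOfListConsSMulTopEquivQuotSMulTopInner A x xs

lemma ExtIsZero.of_quotListSMulTop_left_of_mem_annihilator
    (hA : IsWeaklyRegular A xs)
    (hY : ∀ x ∈ xs, x ∈ Module.annihilator R Y)
    (h : ExtIsZero R (QuotListSMulTop xs A) Y (n + xs.length)) : ExtIsZero R A Y n := by
  induction xs generalizing A n with
  | nil => exact (extIsZero_congr_left (quotListSMulTopNil R A)).1 h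
  | cons x xs ih =>
    obtain ⟨hx, hxs⟩ := (isWeaklyRegular_cons_iff A x xs).1 hA
    obtain ⟨hxY, hxsY⟩ := List.forall_mem_cons.1 hY
    refine .of_quotSMulTop_left_of_mem_annihilator hx hxY (ih hxs hxsY ?_)
    rw [add_right_comm, add_assoc]
    exact (extIsZero_congr_left (quotListSMulTopCons x xs A)).1 h

lemma ExtIsZero.of_quotListSMulTop_left [IsNoetherianRing R] [IsLocalRing R] [Module.Finite R A]
    [Module.Finite R Y] (hA : IsWeaklyRegular A xs)
    (hxs : ∀ x ∈ xs, x ∈ maximalIdeal R)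
    (h : ExtIsZero R (QuotListSMulTop xs A) Y (n + xs.length)) : ExtIsZero R A Y n := by
  induction xs generalizing A n with
  | nil => exact (extIsZero_congr_left (quotListSMulTopNil R A)).1 h
  | cons x xs ih =>
    obtain ⟨hx, hxsA⟩ := (isWeaklyRegular_cons_iff A x xs).1 hA
    obtain ⟨hxm, hxsm⟩ := List.forall_mem_cons.1 hxs
    refine .of_quotSMulTop_left hx hxm (ih hxsA hxsm ?_)
    rw [add_right_comm, add_assoc]
    exact (extIsZero_congr_left (quotListSMulTopCons x xs A)).1 h

lemma extIsZero_quotListSMulTop_left (hA : IsWeaklyRegular A xs)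
    (h : ∀ i, n ≤ i → i ≤ n + xs.length → ExtIsZero R A Y i) :
    ExtIsZero R (QuotListSMulTop xs A) Y (n + xs.length) := by
  induction xs generalizing A n with
  | nil => exact (extIsZero_congr_left (quotListSMulTopNil R A)).2 (h n le_rfl le_rfl)
  | cons x xs ih =>
    obtain ⟨hx, hxs⟩ := (isWeaklyRegular_cons_iff A x xs).1 hA
    rw [extIsZero_congr_left (quotListSMulTopCons x xs A), List.length_cons, ← add_assoc,
      add_right_comm]
    rw [List.length_cons] at h
    refine ih hxs fun i hni hi => ?_
    obtain ⟨i, rfl⟩ := Nat.exists_eq_add_of_le' (show 1 ≤ i by omega)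
    exact .quotSMulTop_left hx (h i (by omega) (by omega)) (h (i + 1) (by omega) (by omega))

lemma extIsZero_quotListSMulTop_right (hA : IsWeaklyRegular A xs)
    (h : ∀ i, q ≤ i → ExtIsZero R X A i) (hn : q ≤ n) :
    ExtIsZero R X (QuotListSMulTop xs A) n := by
  induction xs generalizing A with
  | nil => exact (extIsZero_congr_right (quotListSMulTopNil R A)).2 (h n hn)
  | cons x xs ih =>
    obtain ⟨hx, hxs⟩ := (isWeaklyRegular_cons_iff A x xs).1 hA
    refine (extIsZero_congr_right (quotListSMulTopCons x xs A)).2 (ih hxs fun i hi => ?_)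
    exact .quotSMulTop_right hx (h i hi) (h (i + 1) (by omega))

lemma ExtIsZero.of_quotListSMulTop_right (hA : IsWeaklyRegular A xs)
    (hX : ∀ x ∈ xs, x ∈ Module.annihilator R X)
    (h : ExtIsZero R X (QuotListSMulTop xs A) n) : ExtIsZero R X A n := by
  induction xs generalizing A with
  | nil => exact (extIsZero_congr_right (quotListSMulTopNil R A)).1 h
  | cons x xs ih =>
    obtain ⟨hx, hxs⟩ := (isWeaklyRegular_cons_iff A x xs).1 hA
    obtain ⟨hxX, hxsX⟩ := List.forall_mem_cons.1 hX
    exact .of_quotSMulTop_right hx hxX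
      (ih hxs hxsX ((extIsZero_congr_right (quotListSMulTopCons x xs A)).1 h))

lemma extIsZero_of_lt_length (hA : IsWeaklyRegular A xs)
    (hX : ∀ x ∈ xs, x ∈ Module.annihilator R X) (hn : n < xs.length) : ExtIsZero R X A n := by
  induction xs generalizing A n with
  | nil => exact absurd hn n.not_lt_zero
  | cons x xs ih =>
    obtain ⟨hx, hxs⟩ := (isWeaklyRegular_cons_iff A x xs).1 hA
    obtain ⟨hxX, hxsX⟩ := List.forall_mem_cons.1 hX
    cases n with
    | zero => exact extIsZero_zero_of_mem_annihilator hx hxX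
    | succ n => exact .succ_of_quotSMulTop_right hx hxX (ih hxs hxsX (Nat.lt_of_succ_lt_succ hn))

lemma isSMulRegular_of_extIsZero_quotSMulTop (hAX : ∀ z : X, ∃ φ : A →ₗ[R] X, φ.range = R ∙ z)
    (h : ExtIsZero R (QuotSMulTop x A) X 0) : IsSMulRegular X x := by
  refine (isSMulRegular_iff_right_eq_zero_of_smul).2 fun z hz => ?_
  obtain ⟨φ, hφ⟩ := hAX z
  have hker : x • (⊤ : Submodule R A) ≤ LinearMap.ker φ := by
    rintro _ ⟨a, -, rfl⟩
    obtain ⟨r, hr⟩ := Submodule.mem_span_singleton.1 (hφ ▸ LinearMap.mem_range_self φ a)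
    exact (map_smul φ x a).trans (by rw [← hr, smul_comm, hz, smul_zero])
  have hφ0 : φ = 0 := by
    rw [← (x • ⊤ : Submodule R A).liftQ_mkQ φ hker,
      extIsZero_zero_iff.1 h ((x • ⊤ : Submodule R A).liftQ φ hker), LinearMap.zero_comp]
  rwa [hφ0, LinearMap.range_zero, eq_comm, Submodule.span_singleton_eq_bot] at hφ

lemma exists_linearMap_range_eq_span_quotSMulTop (x : R)
    (hAX : ∀ z : X, ∃ φ : A →ₗ[R] X, φ.range = R ∙ z) (z : QuotSMulTop x X) :
    ∃ φ : QuotSMulTop x A →ₗ[R] QuotSMulTop x X, φ.range = R ∙ z := by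
  obtain ⟨z, rfl⟩ := Submodule.Quotient.mk_surjective _ z
  obtain ⟨φ, hφ⟩ := hAX z
  refine ⟨QuotSMulTop.map x φ, ?_⟩
  have hcomm : QuotSMulTop.map x φ ∘ₗ (x • ⊤ : Submodule R A).mkQ =
      (x • ⊤ : Submodule R X).mkQ ∘ₗ φ := rfl
  rw [← LinearMap.range_comp_of_range_eq_top _ (Submodule.range_mkQ _), hcomm,
    LinearMap.range_comp, hφ, Submodule.map_span, Set.image_singleton, Submodule.mkQ_apply]

lemma isWeaklyRegular_of_extIsZero_quotListSMulTop [IsNoetherianRing R] [IsLocalRing R]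
    [Module.Finite R A] [Module.Finite R X] (hA : IsWeaklyRegular A xs)
    (hxs : ∀ x ∈ xs, x ∈ maximalIdeal R) (hAX : ∀ z : X, ∃ φ : A →ₗ[R] X, φ.range = R ∙ z)
    (h : ∀ i < xs.length, ExtIsZero R (QuotListSMulTop xs A) X i) :
    IsWeaklyRegular X xs := by
  induction xs generalizing A X with
  | nil => exact .nil R X
  | cons x xs ih =>
    obtain ⟨-, hxsA⟩ := (isWeaklyRegular_cons_iff A x xs).1 hA
    obtain ⟨-, hxsm⟩ := List.forall_mem_cons.1 hxs
    replace h (i : ℕ) (hi : i < xs.length + 1) :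
        ExtIsZero R (QuotListSMulTop xs (QuotSMulTop x A)) X i :=
      (extIsZero_congr_left (quotListSMulTopCons x xs A)).1 (h i hi)
    have hx : IsSMulRegular X x := isSMulRegular_of_extIsZero_quotSMulTop hAX <|
      .of_quotListSMulTop_left hxsA hxsm (by simpa only [zero_add] using h xs.length (by omega))
    refine .cons hx (ih hxsA hxsm (exists_linearMap_range_eq_span_quotSMulTop x hAX) fun i hi => ?_)
    exact .quotSMulTop_right hx (h i (by omega)) (h (i + 1) (by omega))

lemma IsShortExact.mem_ofList_smul_top {i : L →ₗ[R] F} {p : F →ₗ[R] X} (h : IsShortExact i p)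
    (hX : IsWeaklyRegular X xs) {u : L}
    (hu : i u ∈ (Ideal.ofList xs • ⊤ : Submodule R F)) :
    u ∈ (Ideal.ofList xs • ⊤ : Submodule R L) := by
  have hzero : Function.Exact (0 : PUnit.{u + 1} →ₗ[R] L) i :=
    (LinearMap.exact_zero_iff_injective PUnit.{u + 1} i).2 h.injective
  rw [← Submodule.Quotient.mk_eq_zero] at hu ⊢
  have hexact :=
    map_first_exact_on_four_term_right_exact_of_isSMulRegular_last
      hzero h.exact h.surjective hX
  obtain ⟨v, hv⟩ := (hexact (Submodule.Quotient.mk u)).1 hu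
  rw [← hv, Subsingleton.elim v 0, map_zero]

end RegularSequence

/-! ### Syzygies -/

section Syzygy

variable {R : Type u} [CommRing R]

/-- `L` is an `n`-th syzygy of `M`, computed with free modules of finite rank; no minimality is
required. -/
inductive IsSyzygy (M : Type u) [AddCommGroup M] [Module R M] : ℕ → ModuleCat.{u} R → Prop
  | zero : IsSyzygy M 0 (ModuleCat.of R M)
  | succ {n r : ℕ} {K L : ModuleCat.{u} R} {i : L →ₗ[R] (Fin r → R)} {p : (Fin r → R) →ₗ[R] K}
      (hK : IsSyzygy M n K) (hL : IsShortExact i p) : IsSyzygy M (n + 1) L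

variable {L M N X : Type u} [AddCommGroup L] [Module R L] [AddCommGroup M] [Module R M]
  [AddCommGroup N] [Module R N] [AddCommGroup X] [Module R X] {n q t : ℕ} {K : ModuleCat.{u} R}

lemma IsSyzygy.finite [IsNoetherianRing R] [Module.Finite R M] (h : IsSyzygy M n K) :
    Module.Finite R K := by
  cases h with
  | zero => assumption
  | succ _ hL => exact .of_injective _ hL.injective

lemma IsSyzygy.extIsZero_iff (h : IsSyzygy M n K) (i : ℕ) :
    ExtIsZero R M N (i + n + 1) ↔ ExtIsZero R K N (i + 1) := by
  induction h generalizing i with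
  | zero => rfl
  | @succ n _ _ _ _ _ _ hL ih =>
    rw [show i + (n + 1) + 1 = i + 1 + n + 1 by omega]
    exact (ih (i + 1)).trans hL.dimension_shift_projective

lemma IsSyzygy.extIsZero_right (h : IsSyzygy M n K) (hR : ∀ i, q ≤ i → ExtIsZero R X R i)
    (hM : ∀ i, q ≤ i → ExtIsZero R X M i) {i : ℕ} (hi : q + n ≤ i) : ExtIsZero R X K i := by
  induction h generalizing i with
  | zero => exact hM i hi
  | succ _ hL ih =>
    obtain ⟨i, rfl⟩ := Nat.exists_eq_add_of_le' (show 1 ≤ i by omega)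
    exact hL.covariant₁ ((hR _ (by omega)).pi_right _) (ih (by omega))

lemma IsShortExact.extIsZero_left_of_lt_length {r i : ℕ} {xs : List R} {f : L →ₗ[R] (Fin r → R)}
    {p : (Fin r → R) →ₗ[R] M} (h : IsShortExact f p)
    (hxs : IsWeaklyRegular R xs)
    (hX : ∀ x ∈ xs, x ∈ Module.annihilator R X) (hM : ∀ i < t, ExtIsZero R X M i)
    (hit : i < t + 1) (hi : i < xs.length) : ExtIsZero R X L i := by
  have hfree : ExtIsZero R X (Fin r → R) i := (extIsZero_of_lt_length hxs hX hi).pi_right r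
  cases i with
  | zero =>
    refine extIsZero_zero_iff.2 fun φ => LinearMap.ext fun x => h.injective ?_
    simpa only [LinearMap.comp_apply, LinearMap.zero_apply, map_zero] using
      LinearMap.congr_fun (extIsZero_zero_iff.1 hfree (f ∘ₗ φ)) x
  | succ i => exact h.covariant₁ hfree (hM i (by omega))

lemma IsSyzygy.extIsZero_of_lt_length {xs : List R} (h : IsSyzygy M n K)
    (hxs : IsWeaklyRegular R xs)
    (hX : ∀ x ∈ xs, x ∈ Module.annihilator R X) (hM : ∀ i < t, ExtIsZero R X M i) {i : ℕ}
    (hit : i < t + n) (hi : i < xs.length) : ExtIsZero R X K i := by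
  induction h generalizing i with
  | zero => exact hM i hit
  | @succ n _ _ _ _ _ _ hL ih =>
    exact hL.extIsZero_left_of_lt_length (t := min (t + n) xs.length) hxs hX
      (fun i hi => ih (by omega) (by omega)) (by omega) hi

end Syzygy

section MinimalCover

variable {R : Type u} [CommRing R] [IsLocalRing R] {L : Type u}
  [AddCommGroup L] [Module R L] [Module.Finite R L]

variable (R L) in
lemma exists_minimal_free_cover : ∃ (r : ℕ) (p : (Fin r → R) →ₗ[R] L), Function.Surjective p ∧
    ∀ u ∈ LinearMap.ker p, ∀ j, u j ∈ maximalIdeal R := by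
  let b := Module.finBasis (ResidueField R) (TensorProduct R (ResidueField R) L)
  let π : L →ₗ[R] TensorProduct R (ResidueField R) L := TensorProduct.mk R (ResidueField R) L 1
  have hπ : Function.Surjective π := TensorProduct.mk_surjective R L _ Ideal.Quotient.mk_surjective
  choose v hv using fun j => hπ (b j)
  refine ⟨_, Fintype.linearCombination R v, ?_, fun u hu j => ?_⟩
  · rw [← LinearMap.range_eq_top, Fintype.range_linearCombination,
      IsLocalRing.span_eq_top_of_tmul_eq_basis v b hv]
  · have hsum : ∑ l, algebraMap R (ResidueField R) (u l) • b l = 0 := by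
      have hu0 := congrArg π (LinearMap.mem_ker.1 hu)
      simpa only [Fintype.linearCombination_apply, map_sum, map_smul, hv, map_zero,
        algebraMap_smul] using hu0
    exact (residue_eq_zero_iff _).1
      (Fintype.linearIndependent_iff.1 b.linearIndependent _ hsum j)

lemma subsingleton_of_extIsZero_zero_residue (h : ExtIsZero R L (R ⧸ maximalIdeal R) 0) :
    Subsingleton L := by
  have hann : maximalIdeal R ≤ Module.annihilator R (L ⧸ (maximalIdeal R • ⊤ : Submodule R L)) :=
    fun x hx => Module.mem_annihilator.2 fun z => by
      obtain ⟨z, rfl⟩ := Submodule.Quotient.mk_surjective _ z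
      exact (Submodule.Quotient.mk_eq_zero _).2 (Submodule.smul_mem_smul hx Submodule.mem_top)
  have hmkQ : (maximalIdeal R • ⊤ : Submodule R L).mkQ = 0 :=
    extIsZero_zero_iff.1 (h.of_residue_right hann) _
  have htop : (⊤ : Submodule R L) ≤ maximalIdeal R • ⊤ := by
    rw [← Submodule.ker_mkQ (maximalIdeal R • ⊤ : Submodule R L), hmkQ, LinearMap.ker_zero]
  exact (Submodule.subsingleton_iff R).1 <| subsingleton_of_bot_eq_top <| Eq.symm <|
    Submodule.eq_bot_of_le_smul_of_le_jacobson_bot _ _ Module.Finite.fg_top htop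
      (maximalIdeal_le_jacobson _)

lemma smul_eq_zero_of_mem_maximalIdeal {x : R} (hx : x ∈ maximalIdeal R)
    (z : R ⧸ maximalIdeal R) : x • z = 0 :=
  Module.mem_annihilator.1 ((Ideal.annihilator_quotient (I := maximalIdeal R)).ge hx) z

lemma nontrivial_quotListSMulTop [Nontrivial L] {xs : List R}
    (hxs : ∀ x ∈ xs, x ∈ maximalIdeal R) : Nontrivial (QuotListSMulTop xs L) :=
  Submodule.Quotient.nontrivial_iff.2 <| Ne.symm <|
    Submodule.top_ne_ideal_smul_of_le_jacobson_annihilator <|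
      (Ideal.span_le.2 hxs).trans (maximalIdeal_le_jacobson _)

variable [IsNoetherianRing R]

variable (R L) in
lemma exists_isSyzygy (n : ℕ) : ∃ K : ModuleCat.{u} R, IsSyzygy L n K := by
  induction n with
  | zero => exact ⟨_, .zero⟩
  | succ n ih =>
    obtain ⟨K, hK⟩ := ih
    have := hK.finite
    obtain ⟨r, p, hp, -⟩ := exists_minimal_free_cover R K
    exact ⟨ModuleCat.of R (LinearMap.ker p), hK.succ (isShortExact_ker_subtype hp)⟩

lemma free_of_extIsZero_one_residue (h : ExtIsZero R L (R ⧸ maximalIdeal R) 1) :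
    Module.Free R L := by
  obtain ⟨r, p, hp, hmin⟩ := exists_minimal_free_cover R L
  have hker : ExtIsZero R (LinearMap.ker p) (R ⧸ maximalIdeal R) 0 := by
    refine extIsZero_zero_iff.2 fun φ => ?_
    obtain ⟨ψ, rfl⟩ := (isShortExact_ker_subtype hp).exists_extension h φ
    ext ⟨u, hu⟩
    change ψ u = 0
    rw [pi_eq_sum_univ u, map_sum]
    refine Finset.sum_eq_zero fun j _ => ?_
    rw [map_smul, smul_eq_zero_of_mem_maximalIdeal (hmin u hu j)]
  have := subsingleton_of_extIsZero_zero_residue hker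
  have hinj : Function.Injective p :=
    LinearMap.ker_eq_bot.1 ((Submodule.subsingleton_iff_eq_bot).1 this)
  exact .of_equiv (LinearEquiv.ofBijective p ⟨hinj, hp⟩)

end MinimalCover

/-! ### Minimal multiplicity -/

section MinimalMultiplicity

/-- `xs` witnesses that the local ring `R`, with maximal ideal `m`, has minimal multiplicity: it
is a weakly regular sequence in `m` with `m ^ 2 = xs m`. Its length is not tied to the dimension of
`R`. -/
structure IsMinimalMultiplicitySequence {R : Type u} [CommRing R] [IsLocalRing R]
    (xs : List R) : Prop where
  mem_maximalIdeal : ∀ x ∈ xs, x ∈ maximalIdeal R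
  isWeaklyRegular : IsWeaklyRegular R xs
  sq_eq : maximalIdeal R ^ 2 = Ideal.ofList xs * maximalIdeal R

variable {R : Type u} [CommRing R] [IsLocalRing R] {xs : List R} {L M X Y : Type u}
  [AddCommGroup L] [Module R L] [AddCommGroup M] [Module R M]
  [AddCommGroup X] [Module R X] [AddCommGroup Y] [Module R Y] {i j n t : ℕ}

namespace IsMinimalMultiplicitySequence

lemma mul_mem_ofList (h : IsMinimalMultiplicitySequence xs) {x y : R} (hx : x ∈ maximalIdeal R)
    (hy : y ∈ maximalIdeal R) : x * y ∈ Ideal.ofList xs := by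
  have hxy : x * y ∈ Ideal.ofList xs * maximalIdeal R := by
    rw [← h.sq_eq, sq]
    exact Ideal.mul_mem_mul hx hy
  exact Ideal.mul_le_left hxy

lemma mem_annihilator_residue (h : IsMinimalMultiplicitySequence xs) :
    ∀ x ∈ xs, x ∈ Module.annihilator R (R ⧸ maximalIdeal R) := fun x hx =>
  Ideal.annihilator_quotient.ge (h.mem_maximalIdeal x hx)

lemma exists_isShortExact_residue (h : IsMinimalMultiplicitySequence xs) :
    ∃ (V : Submodule R (QuotListSMulTop xs R)) (p : QuotListSMulTop xs R →ₗ[R] R ⧸ maximalIdeal R),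
      IsShortExact V.subtype p ∧ maximalIdeal R ≤ Module.annihilator R V := by
  have hle : (Ideal.ofList xs • ⊤ : Submodule R R) ≤ maximalIdeal R := by
    rw [smul_eq_mul, Ideal.mul_top]
    exact Ideal.span_le.2 h.mem_maximalIdeal
  let p := Submodule.factor hle
  refine ⟨LinearMap.ker p, p, isShortExact_ker_subtype (Submodule.factor_surjective hle),
    fun x hx => Module.mem_annihilator.2 ?_⟩
  rintro ⟨z, hz⟩
  obtain ⟨y, rfl⟩ := Submodule.Quotient.mk_surjective _ z
  have hy : y ∈ maximalIdeal R := (Submodule.Quotient.mk_eq_zero (maximalIdeal R)).1 hz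
  refine Subtype.ext ((Submodule.Quotient.mk_eq_zero _).2 ?_)
  rw [smul_eq_mul, Ideal.mul_top]
  exact h.mul_mem_ofList hx hy

lemma extIsZero_quotListSMulTop (h : IsMinimalMultiplicitySequence xs) (hi : xs.length + 1 ≤ i) :
    ExtIsZero R (QuotListSMulTop xs R) Y i := by
  obtain ⟨j, rfl⟩ := Nat.exists_eq_add_of_le' hi
  rw [← add_assoc, add_right_comm]
  refine extIsZero_quotListSMulTop_left h.isWeaklyRegular fun i hi _ => ?_
  obtain ⟨i, rfl⟩ := Nat.exists_eq_add_of_le' (show 1 ≤ i by omega)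
  exact extIsZero_succ_of_projective i

-- Since `L` lies in `m F`, the relation `m ^ 2 = xs m` puts `m L` inside `L ∩ xs F`, which is
-- `xs L` because `xs` is regular on `X = F ⧸ L`.
lemma le_annihilator_quotListSMulTop (h : IsMinimalMultiplicitySequence xs) {r : ℕ}
    {f : L →ₗ[R] (Fin r → R)} {p : (Fin r → R) →ₗ[R] X} (hL : IsShortExact f p)
    (hmin : ∀ u j, f u j ∈ maximalIdeal R) (hX : IsWeaklyRegular X xs) :
    maximalIdeal R ≤ Module.annihilator R (QuotListSMulTop xs L) := by
  refine fun x hx => Module.mem_annihilator.2 fun u => ?_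
  obtain ⟨u, rfl⟩ := Submodule.Quotient.mk_surjective _ u
  refine (Submodule.Quotient.mk_eq_zero _).2 (hL.mem_ofList_smul_top hX ?_)
  rw [pi_eq_sum_univ (f (x • u)), map_smul]
  exact Submodule.sum_mem _ fun j _ =>
    Submodule.smul_mem_smul (h.mul_mem_ofList hx (hmin u j)) Submodule.mem_top

variable [IsNoetherianRing R]

lemma extIsZero_residue_succ_iff (h : IsMinimalMultiplicitySequence xs) (hi : xs.length + 1 ≤ i) :
    ExtIsZero R (R ⧸ maximalIdeal R) Y (i + 1) ↔ ExtIsZero R (R ⧸ maximalIdeal R) Y i := by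
  obtain ⟨V, p, hp, hV⟩ := h.exists_isShortExact_residue
  refine ⟨fun hk => ?_, fun hk => hp.contravariant₃ (h.extIsZero_quotListSMulTop (by omega))
    (hk.of_residue_left hV)⟩
  cases subsingleton_or_nontrivial V with
  | inl _ =>
    obtain ⟨i, rfl⟩ := Nat.exists_eq_add_of_le' (show 1 ≤ i by omega)
    exact hp.contravariant₃ (h.extIsZero_quotListSMulTop hi) (extIsZero_of_subsingleton_left i)
  | inr _ =>
    exact (extIsZero_iff_residue_left hV).1
      (hp.contravariant₁ (h.extIsZero_quotListSMulTop hi) hk)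

lemma extIsZero_residue_congr (h : IsMinimalMultiplicitySequence xs) (hi : xs.length + 1 ≤ i)
    (hj : xs.length + 1 ≤ j) :
    ExtIsZero R (R ⧸ maximalIdeal R) Y i ↔ ExtIsZero R (R ⧸ maximalIdeal R) Y j := by
  have hbase (n : ℕ) (hn : xs.length + 1 ≤ n) : ExtIsZero R (R ⧸ maximalIdeal R) Y n ↔
      ExtIsZero R (R ⧸ maximalIdeal R) Y (xs.length + 1) := by
    induction n, hn using Nat.le_induction with
    | base => rfl
    | succ n hn ih => exact (h.extIsZero_residue_succ_iff hn).trans ih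
  exact (hbase i hi).trans (hbase j hj).symm

lemma isWeaklyRegular_of_extIsZero_residue [Module.Finite R X]
    (h : IsMinimalMultiplicitySequence xs)
    (hX : ∀ i < xs.length, ExtIsZero R (R ⧸ maximalIdeal R) X i) :
    IsWeaklyRegular X xs := by
  obtain ⟨V, p, hp, hV⟩ := h.exists_isShortExact_residue
  exact isWeaklyRegular_of_extIsZero_quotListSMulTop h.isWeaklyRegular h.mem_maximalIdeal
    (fun z => ⟨LinearMap.toSpanSingleton R X z, LinearMap.range_toSpanSingleton z⟩)
    fun i hi => hp.contravariant₂ ((hX i hi).of_residue_left hV) (hX i hi)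

lemma exists_isSyzygy (h : IsMinimalMultiplicitySequence xs) [Module.Finite R M]
    (hM : ∀ i < t, ExtIsZero R (R ⧸ maximalIdeal R) M i) (hn : xs.length ≤ t + n) :
    ∃ L : ModuleCat.{u} R, IsSyzygy M (n + 1) L ∧ IsWeaklyRegular L xs ∧
      maximalIdeal R ≤ Module.annihilator R (QuotListSMulTop xs L) := by
  obtain ⟨K, hK⟩ := _root_.exists_isSyzygy R M n
  have := hK.finite
  obtain ⟨r, p, hp, hmin⟩ := exists_minimal_free_cover R K
  have hL : IsSyzygy M (n + 1) (ModuleCat.of R (LinearMap.ker p)) :=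
    hK.succ (isShortExact_ker_subtype hp)
  have hregular {n : ℕ} {K : ModuleCat.{u} R} (hK : IsSyzygy M n K) (hn : xs.length ≤ t + n) :
      IsWeaklyRegular K xs := by
    have := hK.finite
    exact h.isWeaklyRegular_of_extIsZero_residue fun i hi =>
      hK.extIsZero_of_lt_length h.isWeaklyRegular h.mem_annihilator_residue hM (by omega) hi
  exact ⟨_, hL, hregular hL (by omega), h.le_annihilator_quotListSMulTop
    (isShortExact_ker_subtype hp) (fun u => hmin u u.2) (hregular hK hn)⟩

variable [Module.Finite R L]

lemma extIsZero_residue_of_extIsZero (h : IsMinimalMultiplicitySequence xs) [Nontrivial L]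
    (hL : IsWeaklyRegular L xs)
    (hann : maximalIdeal R ≤ Module.annihilator R (QuotListSMulTop xs L))
    (hY : ∀ i ≤ xs.length, ExtIsZero R L Y (i + 1)) (hi : xs.length + 1 ≤ i) :
    ExtIsZero R (R ⧸ maximalIdeal R) Y i := by
  have := nontrivial_quotListSMulTop (L := L) h.mem_maximalIdeal
  refine (h.extIsZero_residue_congr hi (j := 1 + xs.length) (by omega)).2 <|
    (extIsZero_iff_residue_left hann).1 <| extIsZero_quotListSMulTop_left hL fun i hi hi' => ?_
  obtain ⟨i, rfl⟩ := Nat.exists_eq_add_of_le' hi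
  exact hY i (by omega)

lemma free_of_extIsZero_residue (h : IsMinimalMultiplicitySequence xs)
    (hL : IsWeaklyRegular L xs)
    (hann : maximalIdeal R ≤ Module.annihilator R (QuotListSMulTop xs L))
    (hk : ExtIsZero R (R ⧸ maximalIdeal R) (R ⧸ maximalIdeal R) (1 + xs.length)) :
    Module.Free R L :=
  free_of_extIsZero_one_residue <| .of_quotListSMulTop_left_of_mem_annihilator hL
    h.mem_annihilator_residue (hk.of_residue_left hann)

end IsMinimalMultiplicitySequence

end MinimalMultiplicity

/-! ### Injective dimension, depth and freeness -/

section InjectiveDimension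

variable {R : Type u} [CommRing R] {N Y : Type u} [AddCommGroup N] [Module R N] [AddCommGroup Y]
  [Module R Y] {i n : ℕ}

lemma injective_of_extIsZero_one_quotient (h : ∀ I : Ideal R, ExtIsZero R (R ⧸ I) Y 1) :
    Module.Injective R Y := by
  have hBaer : Module.Baer R Y := fun I φ => by
    have hI : IsShortExact I.subtype I.mkQ :=
      ⟨Subtype.val_injective, LinearMap.exact_subtype_mkQ I, Submodule.mkQ_surjective _⟩
    obtain ⟨ψ, hψ⟩ := hI.exists_extension (h I) φ
    exact ⟨ψ, fun x hx => LinearMap.congr_fun hψ ⟨x, hx⟩⟩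
  exact hBaer.injective

lemma extIsZero_succ_of_forall_quotient
    (h : ∀ (I : Ideal R) (i : ℕ), n ≤ i → ExtIsZero R (R ⧸ I) Y (i + 1)) (hi : n ≤ i) :
    ExtIsZero R N Y (i + 1) := by
  induction n generalizing Y i with
  | zero =>
    have := injective_of_extIsZero_one_quotient fun I => h I 0 le_rfl
    exact extIsZero_succ_of_injective i
  | succ n ih =>
    obtain ⟨E, _, _, _, f, hf⟩ := exists_injective_embedding R Y
    have hshort := isShortExact_mkQ_range hf
    obtain ⟨i, rfl⟩ := Nat.exists_eq_add_of_le' (show 1 ≤ i by omega)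
    exact hshort.dimension_shift_injective.2 <| ih (fun I j hj =>
      hshort.dimension_shift_injective.1 (h I (j + 1) (by omega))) (by omega)

lemma IsMinimalMultiplicitySequence.extIsZero_of_extIsZero_residue [IsNoetherianRing R]
    [IsLocalRing R] [Module.Finite R Y] {xs : List R} (h : IsMinimalMultiplicitySequence xs)
    {j : ℕ} (hj : xs.length + 1 ≤ j) (hk : ExtIsZero R (R ⧸ maximalIdeal R) Y j)
    (hi : xs.length + 2 ≤ i) : ExtIsZero R N Y i := by
  obtain ⟨i, rfl⟩ := Nat.exists_eq_add_of_le' (show 1 ≤ i by omega)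
  refine extIsZero_succ_of_forall_quotient (n := xs.length + 1) (fun I i hi => ?_) (by omega)
  obtain ⟨l, rfl⟩ := Nat.exists_eq_add_of_le' hi
  obtain ⟨L, hL, hreg, hann⟩ := h.exists_isSyzygy (M := R ⧸ I) (t := 0) (n := xs.length)
    (fun i hi => absurd hi i.not_lt_zero) (Nat.zero_add _).ge
  have := hL.finite
  exact (hL.extIsZero_iff l).2 <| .of_quotListSMulTop_left hreg h.mem_maximalIdeal <|
    .of_residue_left hann <| (h.extIsZero_residue_congr hj (by omega)).1 hk

end InjectiveDimension

section Free

variable {S : Type u} [CommRing S] [IsNoetherianRing S] [IsLocalRing S] {M N : Type u}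
  [AddCommGroup M] [Module S M] [AddCommGroup N] [Module S N] [Module.Finite S N] {i q : ℕ}

lemma extIsZero_succ_of_forall_ge
    (hM : ∀ (N : ModuleCat.{u} S) (i : ℕ), q ≤ i → ExtIsZero S M N (i + 1))
    (hS : ∀ i, ExtIsZero S M S (i + 1)) : ExtIsZero S M N (i + 1) := by
  suffices hdescent : ∀ n i (K : ModuleCat.{u} S) [Module.Finite S K], q ≤ i + n →
      ExtIsZero S M K (i + 1) from hdescent q i (ModuleCat.of S N) (by omega)
  intro n
  induction n with
  | zero => exact fun i K _ hi => hM K i hi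
  | succ n ih =>
    intro i K _ hi
    obtain ⟨r, p, hp, -⟩ := exists_minimal_free_cover S K
    exact (isShortExact_ker_subtype hp).covariant₃ ((hS i).pi_right r)
      (ih (i + 1) (ModuleCat.of S (LinearMap.ker p)) (by omega))

lemma free_of_extIsZero [Module.Finite S M]
    (hM : ∀ (N : ModuleCat.{u} S) (i : ℕ), q ≤ i → ExtIsZero S M N (i + 1))
    (hS : ∀ i < q, ExtIsZero S M S (i + 1)) : Module.Free S M :=
  free_of_extIsZero_one_residue <| extIsZero_succ_of_forall_ge hM fun i =>
    (lt_or_ge i q).elim (hS i) (hM (ModuleCat.of S S) i)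

end Free

section DepthAndDimension

lemma extIsZero_residue_of_lt_depth {R S M : Type} [CommRing R] [IsLocalRing R] [CommRing S]
    [IsLocalRing S] [Algebra R S] [AddCommGroup M] [Module R M] [Module S M] [IsScalarTower R S M]
    (hS : Function.Surjective (algebraMap R S)) {i : ℕ} (hi : (i : ℕ∞) < depth S M) :
    ExtIsZero R (R ⧸ maximalIdeal R) M i := by
  obtain ⟨_, ⟨ys, hys, hreg, rfl⟩, hlt⟩ := lt_sSup_iff.1 hi
  obtain ⟨xs, rfl⟩ := List.map_surjective_iff.2 hS ys
  refine extIsZero_of_lt_length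
    ((isWeaklyRegular_map_algebraMap_iff S M xs).1 hreg.toIsWeaklyRegular)
    (fun x hx => ?_) (by simpa only [List.length_map, Nat.cast_lt] using hlt)
  have hxm : algebraMap R S x ∈ maximalIdeal S := hys _ (List.mem_map_of_mem hx)
  exact Ideal.annihilator_quotient.ge fun hu => hxm (hu.map _)

lemma ringKrullDim_le_ringKrullDim_quotient_ofList_add_length {R : Type u} [CommRing R]
    [IsNoetherianRing R] [IsLocalRing R] {fs : List R} (hfs : ∀ x ∈ fs, x ∈ maximalIdeal R) :
    ringKrullDim R ≤ ringKrullDim (R ⧸ Ideal.ofList fs) + fs.length := by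
  classical
  have hcoe : ((fs.toFinset : Finset R) : Set R) = {x | x ∈ fs} := List.coe_toFinset fs
  have hdim := ringKrullDim_le_ringKrullDim_quotient_add_card fs.toFinset
    (by rwa [hcoe, IsLocalRing.ringJacobson_eq_maximalIdeal])
  rw [hcoe] at hdim
  exact hdim.trans (by gcongr; exact List.toFinset_card_le fs)

end DepthAndDimension

/-! ### Ext-vanishing over quotients of rings of minimal multiplicity -/

section MainArgument

variable {R S : Type u} [CommRing R] [CommRing S] [Algebra R S] {M N X : Type u}
  [AddCommGroup M] [Module S M] [Module R M] [IsScalarTower R S M]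
  [AddCommGroup N] [Module S N] [AddCommGroup X] [Module R X] {fs xs : List R}
  {L : ModuleCat.{u} R} {a i n q t : ℕ}

namespace IsQuotientByRegularSequence

lemma extIsZero_of_isSyzygy_of_projective (hfs : IsQuotientByRegularSequence R S fs) (ha : 1 ≤ a)
    (hMM : ∀ i, a ≤ i → i ≤ a + fs.length → ExtIsZero S M M i) (hL : IsSyzygy M (n + 1) L)
    [Module.Projective R L] (hi : n + 2 ≤ i) : ExtIsZero S M N i := by
  let : Module R N := Module.compHom N (algebraMap R S)
  have : IsScalarTower R S N := .of_algebraMap_smul fun _ _ => rfl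
  refine hfs.extIsZero_of_base_left ha hMM (q := n + 2) (by omega) (fun j hj => ?_) hi
  obtain ⟨j, rfl⟩ := Nat.exists_eq_add_of_le' hj
  exact (hL.extIsZero_iff j).2 (extIsZero_succ_of_projective j)

lemma extIsZero_of_right (hfs : IsQuotientByRegularSequence R S fs)
    (hX : ∀ x ∈ fs, x ∈ Module.annihilator R X) (h : ExtIsZero R X S i) : ExtIsZero R X R i := by
  have hker : (Ideal.ofList fs • ⊤ : Submodule R R) = LinearMap.ker (Algebra.linearMap R S) := by
    rw [smul_eq_mul, Ideal.mul_top, ← hfs.ker_eq]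
    rfl
  let e : QuotListSMulTop fs R ≃ₗ[R] S := (Submodule.quotEquivOfEq _ _ hker).trans
    ((Algebra.linearMap R S).quotKerEquivOfSurjective hfs.surjective)
  exact .of_quotListSMulTop_right hfs.isWeaklyRegular hX ((extIsZero_congr_right e).2 h)

end IsQuotientByRegularSequence

variable [IsNoetherianRing R] [IsLocalRing R]

namespace IsMinimalMultiplicitySequence

lemma extIsZero_residue_of_isSyzygy (h : IsMinimalMultiplicitySequence xs) [Module.Finite R M]
    (hL : IsSyzygy M (n + 1) L) [Nontrivial L] (hreg : IsWeaklyRegular L xs)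
    (hann : maximalIdeal R ≤ Module.annihilator R (QuotListSMulTop xs L))
    (hMX : ∀ i, n + 2 ≤ i → i ≤ n + 2 + xs.length → ExtIsZero R M X i)
    (hi : xs.length + 1 ≤ i) : ExtIsZero R (R ⧸ maximalIdeal R) X i := by
  have := hL.finite
  exact h.extIsZero_residue_of_extIsZero hreg hann
    (fun j hj => (hL.extIsZero_iff j).1 (hMX _ (by omega) (by omega))) hi

lemma free_of_isSyzygy (h : IsMinimalMultiplicitySequence xs) [Module.Finite R M]
    (hL : IsSyzygy M n L) [Nontrivial L] (hreg : IsWeaklyRegular L xs)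
    (hann : maximalIdeal R ≤ Module.annihilator R (QuotListSMulTop xs L))
    (hkM : ∀ i, q ≤ i → ExtIsZero R (R ⧸ maximalIdeal R) M i)
    (hkR : ∀ i, q ≤ i → ExtIsZero R (R ⧸ maximalIdeal R) R i) : Module.Free R L := by
  have := hL.finite
  have := nontrivial_quotListSMulTop (L := L) h.mem_maximalIdeal
  have hkL (i : ℕ) (hi : q + n ≤ i) : ExtIsZero R (R ⧸ maximalIdeal R) L i :=
    hL.extIsZero_right hkR hkM hi
  have hkk : ExtIsZero R (R ⧸ maximalIdeal R) (R ⧸ maximalIdeal R) (q + n + (1 + xs.length)) :=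
    (extIsZero_iff_residue_right hann).1 (extIsZero_quotListSMulTop_right hreg hkL (by omega))
  exact h.free_of_extIsZero_residue hreg hann
    ((h.extIsZero_residue_congr (by omega) (by omega)).1 hkk)

variable (h : IsMinimalMultiplicitySequence xs) (hfs : IsQuotientByRegularSequence R S fs)
  [Module.Finite R M] (ha : 1 ≤ a) (han : a + fs.length = n + 2)
  (hMM : ∀ i, a ≤ i → i ≤ a + (xs.length + fs.length) → ExtIsZero S M M i)
  (hdepth : ∀ i < t, ExtIsZero R (R ⧸ maximalIdeal R) M i) (ht : xs.length ≤ t + n)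
include h hfs ha han hMM hdepth ht

theorem projDim_or_injDim_of_extIsZero_self :
    (∀ (N : ModuleCat.{u} S) i, n + 2 ≤ i → ExtIsZero S M N i) ∨
      ∀ (N : ModuleCat.{u} S) i, xs.length + 2 ≤ i → ExtIsZero S N M i := by
  obtain ⟨L, hL, hreg, hann⟩ := h.exists_isSyzygy hdepth ht
  cases subsingleton_or_nontrivial L with
  | inl _ =>
    exact .inl fun N i => hfs.extIsZero_of_isSyzygy_of_projective ha
      (fun i hi hi' => hMM i hi (by omega)) hL
  | inr _ =>
    have hkM : ExtIsZero R (R ⧸ maximalIdeal R) M (xs.length + 1) :=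
      h.extIsZero_residue_of_isSyzygy hL hreg hann
        (fun i hi hi' => hfs.extIsZero_of_window ha hMM (by omega) (by omega)) le_rfl
    refine .inr fun N i => ?_
    let : Module R N := Module.compHom N (algebraMap R S)
    have : IsScalarTower R S N := .of_algebraMap_smul fun _ _ => rfl
    exact hfs.extIsZero_of_base_right ha (fun i hi hi' => hMM i hi (by omega)) (by omega)
      fun i hi => h.extIsZero_of_extIsZero_residue le_rfl hkM hi

theorem projDim_of_extIsZero_self_of_extIsZero_ring (hfsm : ∀ x ∈ fs, x ∈ maximalIdeal R)
    (hMS : ∀ i, a ≤ i → i ≤ a + (xs.length + fs.length) → ExtIsZero S M S i)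
    (hi : n + 2 ≤ i) : ExtIsZero S M N i := by
  obtain ⟨L, hL, hreg, hann⟩ := h.exists_isSyzygy hdepth ht
  have hfree : Module.Free R L := by
    cases subsingleton_or_nontrivial L with
    | inl _ => infer_instance
    | inr _ =>
      have hkM (i : ℕ) (hi : xs.length + 1 ≤ i) : ExtIsZero R (R ⧸ maximalIdeal R) M i :=
        h.extIsZero_residue_of_isSyzygy hL hreg hann
          (fun i hi hi' => hfs.extIsZero_of_window ha hMM (by omega) (by omega)) hi
      have hkS (i : ℕ) (hi : xs.length + 1 ≤ i) : ExtIsZero R (R ⧸ maximalIdeal R) S i :=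
        h.extIsZero_residue_of_isSyzygy hL hreg hann
          (fun i hi hi' => hfs.extIsZero_of_window ha hMS (by omega) (by omega)) hi
      exact h.free_of_isSyzygy hL hreg hann hkM fun i hi => hfs.extIsZero_of_right
        (fun x hx => Ideal.annihilator_quotient.ge (hfsm x hx)) (hkS i hi)
  exact hfs.extIsZero_of_isSyzygy_of_projective ha (fun i hi hi' => hMM i hi (by omega)) hL hi

end IsMinimalMultiplicitySequence

end MainArgument

theorem statement19_general (R : Type) [CommRing R] [IsNoetherianRing R] [IsLocalRing R]
    (d : ℕ) (hdim : ringKrullDim R = (d : WithBot ℕ∞)) (hmin : HasMinimalMultiplicity R d)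
    (c : ℕ) (fs : List R) (hlen : fs.length = c) (hmem : ∀ x ∈ fs, x ∈ maximalIdeal R)
    (hreg : RingTheory.Sequence.IsWeaklyRegular R fs)
    [IsLocalRing (R ⧸ Ideal.ofList fs)]
    (M : Type) [AddCommGroup M] [Module (R ⧸ Ideal.ofList fs) M]
    [Module.Finite (R ⧸ Ideal.ofList fs) M]
    (dS tS : ℕ) (hdS : ringKrullDim (R ⧸ Ideal.ofList fs) = (dS : WithBot ℕ∞))
    (htS : depth (R ⧸ Ideal.ofList fs) M = (tS : ℕ∞)) :
    ((∃ a : ℕ, dS - tS + 2 ≤ a ∧ ∀ i : ℕ, a ≤ i → i ≤ a + (d + c) →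
        ExtVanish (R ⧸ Ideal.ofList fs) M M i) →
      ProjDimFinite (R ⧸ Ideal.ofList fs) M ∨ InjDimFinite (R ⧸ Ideal.ofList fs) M) ∧
    ((∀ i : ℕ, dS - tS + 2 ≤ i → i ≤ dS - tS + (d + c) + 2 →
        ExtVanish (R ⧸ Ideal.ofList fs) M M i) →
      (∀ j : ℕ, 1 ≤ j → j ≤ dS - tS + (d + c) + 2 →
        ExtVanish (R ⧸ Ideal.ofList fs) M (R ⧸ Ideal.ofList fs) j) →
      Module.Free (R ⧸ Ideal.ofList fs) M) := by
  obtain ⟨xs, rfl, hxs, hreg', hsq⟩ := hmin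
  subst hlen
  let : Module R M := Module.compHom M (algebraMap R (R ⧸ Ideal.ofList fs))
  have : IsScalarTower R (R ⧸ Ideal.ofList fs) M := .of_algebraMap_smul fun _ _ => rfl
  have : Module.Finite R M := .trans (R ⧸ Ideal.ofList fs) M
  have h : IsMinimalMultiplicitySequence xs := ⟨hxs, hreg', hsq⟩
  have hfs : IsQuotientByRegularSequence R (R ⧸ Ideal.ofList fs) fs :=
    ⟨hreg, Ideal.Quotient.mk_surjective, Ideal.mk_ker⟩
  have hdepth (i : ℕ) (hi : i < tS) : ExtIsZero R (R ⧸ maximalIdeal R) M i :=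
    extIsZero_residue_of_lt_depth hfs.surjective (by rwa [htS, Nat.cast_lt])
  have hbound : xs.length ≤ dS + fs.length := by
    have := ringKrullDim_le_ringKrullDim_quotient_ofList_add_length hmem
    rw [hdim, hdS] at this
    exact_mod_cast this
  refine ⟨fun ⟨a, ha, hMM⟩ => ?_, fun hMM hMS => ?_⟩
  · refine (h.projDim_or_injDim_of_extIsZero_self hfs (a := a) (n := a + fs.length - 2)
      (by omega) (by omega) (fun i hi hi' => (extVanish_iff (by omega)).1 (hMM i hi hi'))
      hdepth (by omega)).imp (fun hpd => ⟨a + fs.length, fun N i hi => ?_⟩)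
        fun hid => ⟨xs.length + 2, fun N i hi => (extVanish_iff (by omega)).2 (hid N i hi)⟩
    exact (extVanish_iff (by omega)).2 (hpd N i (by omega))
  · have hpd (N : ModuleCat (R ⧸ Ideal.ofList fs)) (i : ℕ) (hi : dS - tS + fs.length + 1 ≤ i) :
        ExtIsZero (R ⧸ Ideal.ofList fs) M N (i + 1) :=
      h.projDim_of_extIsZero_self_of_extIsZero_ring hfs (a := dS - tS + 2) (by omega)
        (Nat.add_right_comm ..) (fun i hi hi' => (extVanish_iff (by omega)).1
          (hMM i hi (by omega))) hdepth (by omega) hmem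
        (fun i hi hi' => (extVanish_iff (by omega)).1 (hMS i (by omega) (by omega))) (by omega)
    exact free_of_extIsZero hpd fun i hi =>
      (extVanish_iff (by omega)).1 (hMS (i + 1) (by omega) (by omega))

theorem statement19 (R : Type) [CommRing R] [IsNoetherianRing R] [IsLocalRing R]
    (d : ℕ) (hdim : ringKrullDim R = (d : WithBot ℕ∞)) (hCM : depth R R = (d : ℕ∞))
    (hmin : HasMinimalMultiplicity R d)
    (c : ℕ) (fs : List R) (hlen : fs.length = c) (hmem : ∀ x ∈ fs, x ∈ maximalIdeal R)
    (hreg : RingTheory.Sequence.IsWeaklyRegular R fs)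
    [IsLocalRing (R ⧸ Ideal.ofList fs)]
    (M : Type) [AddCommGroup M] [Module (R ⧸ Ideal.ofList fs) M]
    [Module.Finite (R ⧸ Ideal.ofList fs) M]
    (dS tS : ℕ) (hdS : ringKrullDim (R ⧸ Ideal.ofList fs) = (dS : WithBot ℕ∞))
    (htS : depth (R ⧸ Ideal.ofList fs) M = (tS : ℕ∞)) :
    ((dS - tS ≤ 1) →
      (∃ a : ℕ, dS - tS + 2 ≤ a ∧ ∀ i : ℕ, a ≤ i → i ≤ a + (d + c) →
        ExtVanish (R ⧸ Ideal.ofList fs) M M i) →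
      ProjDimFinite (R ⧸ Ideal.ofList fs) M ∨ InjDimFinite (R ⧸ Ideal.ofList fs) M) ∧
    ((∀ i : ℕ, dS - tS + 2 ≤ i → i ≤ dS - tS + (d + c) + 2 →
        ExtVanish (R ⧸ Ideal.ofList fs) M M i) →
      (∀ j : ℕ, 1 ≤ j → j ≤ 2 * (dS - tS) + (d + c) + 2 →
        ExtVanish (R ⧸ Ideal.ofList fs) M (R ⧸ Ideal.ofList fs) j) →
      Module.Free (R ⧸ Ideal.ofList fs) M) :=
  have h := statement19_general R d hdim hmin c fs hlen hmem hreg M dS tS hdS htS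
  ⟨fun _ => h.1, fun hMM hMS => h.2 hMM fun j hj hj' => hMS j hj (by omega)⟩
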